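/- arXiv:1206.0411 — 4 statements merged into one kernel-verified Lean document; each statement's English description precedes it below -/
import Mathlib

section
/- The Ree group Ree(q) has order q^3 (q^3 + 1)(q - 1), and gcd(q^3 + 1, q - 1) = 2. -/
open Matrix

set_option linter.unusedSectionVars false

noncomputable section

namespace ReePaper

variable {F : Type*} [Field F] [Fintype F]

/-- The matrix `α(x)`. -/
def amat (t : ℕ) (x : F) : Matrix (Fin 7) (Fin 7) F :=
  !![1, x^t, 0, 0, -x^(3*t+1), -x^(3*t+2), x^(4*t+2);
     0, 1, x, x^(t+1), -x^(2*t+1), 0, -x^(3*t+2);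
     0, 0, 1, x^t, -x^(2*t), 0, x^(3*t+1);
     0, 0, 0, 1, x^t, 0, 0;
     0, 0, 0, 0, 1, -x, x^(t+1);
     0, 0, 0, 0, 0, 1, -x^t;
     0, 0, 0, 0, 0, 0, 1]

/-- The matrix `β(x)`. -/
def bmat (t : ℕ) (x : F) : Matrix (Fin 7) (Fin 7) F :=
  !![1, 0, -x^t, 0, -x, 0, -x^(t+1);
     0, 1, 0, x^t, 0, -x^(2*t), 0;
     0, 0, 1, 0, 0, 0, x;
     0, 0, 0, 1, 0, x^t, 0;
     0, 0, 0, 0, 1, 0, x^t;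
     0, 0, 0, 0, 0, 1, 0;
     0, 0, 0, 0, 0, 0, 1]

/-- The matrix `γ(x)`. -/
def cmat (t : ℕ) (x : F) : Matrix (Fin 7) (Fin 7) F :=
  !![1, 0, 0, -x^t, 0, -x, -x^(2*t);
     0, 1, 0, 0, -x^t, 0, x;
     0, 0, 1, 0, 0, x^t, 0;
     0, 0, 0, 1, 0, 0, -x^t;
     0, 0, 0, 0, 1, 0, 0;
     0, 0, 0, 0, 0, 1, 0;
     0, 0, 0, 0, 0, 0, 1]

/-- The diagonal matrix `h(λ)`. -/
def hmat (t : ℕ) (l : Fˣ) : Matrix (Fin 7) (Fin 7) F :=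
  Matrix.diagonal ![((l ^ (t : ℤ) : Fˣ) : F), ((l ^ (1 - (t : ℤ)) : Fˣ) : F),
    ((l ^ (2 * (t : ℤ) - 1) : Fˣ) : F), 1, ((l ^ (1 - 2 * (t : ℤ)) : Fˣ) : F),
    ((l ^ ((t : ℤ) - 1) : Fˣ) : F), ((l ^ (-(t : ℤ)) : Fˣ) : F)]

/-- The matrix `Υ`, the antidiagonal matrix with all entries `-1`. -/
def ups : Matrix (Fin 7) (Fin 7) F :=
  !![0, 0, 0, 0, 0, 0, -1;
     0, 0, 0, 0, 0, -1, 0;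
     0, 0, 0, 0, -1, 0, 0;
     0, 0, 0, -1, 0, 0, 0;
     0, 0, -1, 0, 0, 0, 0;
     0, -1, 0, 0, 0, 0, 0;
     -1, 0, 0, 0, 0, 0, 0]

/-- `S(a, b, c) = α(a) β(b) γ(c)`. -/
def Smat (t : ℕ) (a b c : F) : Matrix (Fin 7) (Fin 7) F :=
  amat t a * bmat t b * cmat t c

/-- The Ree group `Ree(q) = ⟨α(x), β(x), γ(x), h(λ), Υ⟩ ≤ GL(7, q)`. -/
def ReeGroup (t : ℕ) : Subgroup (GL (Fin 7) F) :=
  Subgroup.closure {g : GL (Fin 7) F |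
    (∃ x : F, (g : Matrix (Fin 7) (Fin 7) F) = amat t x) ∨
    (∃ x : F, (g : Matrix (Fin 7) (Fin 7) F) = bmat t x) ∨
    (∃ x : F, (g : Matrix (Fin 7) (Fin 7) F) = cmat t x) ∨
    (∃ l : Fˣ, (g : Matrix (Fin 7) (Fin 7) F) = hmat t l) ∨
    (g : Matrix (Fin 7) (Fin 7) F) = ups}

/-- The subgroup `U(q) = ⟨α(x), β(x), γ(x)⟩`. -/
def Usub (t : ℕ) : Subgroup (GL (Fin 7) F) :=
  Subgroup.closure {g : GL (Fin 7) F |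
    (∃ x : F, (g : Matrix (Fin 7) (Fin 7) F) = amat t x) ∨
    (∃ x : F, (g : Matrix (Fin 7) (Fin 7) F) = bmat t x) ∨
    (∃ x : F, (g : Matrix (Fin 7) (Fin 7) F) = cmat t x)}

/-- The subgroup `H(q) = {h(λ) : λ ∈ F_q^×}`. -/
def Hsub (t : ℕ) : Subgroup (GL (Fin 7) F) :=
  Subgroup.closure {g : GL (Fin 7) F |
    ∃ l : Fˣ, (g : Matrix (Fin 7) (Fin 7) F) = hmat t l}

end ReePaper


open ReePaper
namespace ReeAux

variable {F : Type*} [Field F]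

def am (a A : F) : Matrix (Fin 7) (Fin 7) F :=
  !![1, A, 0, 0, -(A^3*a), -(A^3*a^2), A^4*a^2;
     0, 1, a, A*a, -(A^2*a), 0, -(A^3*a^2);
     0, 0, 1, A, -A^2, 0, A^3*a;
     0, 0, 0, 1, A, 0, 0;
     0, 0, 0, 0, 1, -a, A*a;
     0, 0, 0, 0, 0, 1, -A;
     0, 0, 0, 0, 0, 0, 1]

def bm (a A : F) : Matrix (Fin 7) (Fin 7) F :=
  !![1, 0, -A, 0, -a, 0, -(A*a);
     0, 1, 0, A, 0, -A^2, 0;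
     0, 0, 1, 0, 0, 0, a;
     0, 0, 0, 1, 0, A, 0;
     0, 0, 0, 0, 1, 0, A;
     0, 0, 0, 0, 0, 1, 0;
     0, 0, 0, 0, 0, 0, 1]

def cm (a A : F) : Matrix (Fin 7) (Fin 7) F :=
  !![1, 0, 0, -A, 0, -a, -A^2;
     0, 1, 0, 0, -A, 0, a;
     0, 0, 1, 0, 0, A, 0;
     0, 0, 0, 1, 0, 0, -A;
     0, 0, 0, 0, 1, 0, 0;
     0, 0, 0, 0, 0, 1, 0;
     0, 0, 0, 0, 0, 0, 1]

/-- The invariant symmetric bilinear form. -/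
def J : Matrix (Fin 7) (Fin 7) F :=
  !![0, 0, 0, 0, 0, 0, 1;
     0, 0, 0, 0, 0, 1, 0;
     0, 0, 0, 0, 1, 0, 0;
     0, 0, 0, -1, 0, 0, 0;
     0, 0, 1, 0, 0, 0, 0;
     0, 1, 0, 0, 0, 0, 0;
     1, 0, 0, 0, 0, 0, 0]

/-- The embedding of the natural module into its exterior square. -/
def kap (x : Fin 7 → F) : Matrix (Fin 7) (Fin 7) F :=
  !![0, 0, 0, x 0, x 1, -x 2, x 3;
     0, 0, x 0, -x 1, 0, -x 3, -x 4;
     0, -x 0, 0, -x 2, -x 3, 0, x 5;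
     -x 0, x 1, x 2, 0, -x 4, -x 5, x 6;
     -x 1, 0, x 3, x 4, 0, x 6, 0;
     x 2, x 3, 0, x 5, -x 6, 0, 0;
     -x 3, x 4, -x 5, -x 6, 0, 0, 0]

/-- The twisted module inside the exterior square (modulo the image of `kap`). -/
def om (y : Fin 7 → F) : Matrix (Fin 7) (Fin 7) F :=
  !![0, y 0, y 1, 0, 0, 0, -y 3;
     -y 0, 0, 0, 0, -y 2, -y 3, 0;
     -y 1, 0, 0, 0, 0, -y 4, 0;
     0, 0, 0, 0, 0, 0, 0;
     0, y 2, 0, 0, 0, 0, y 5;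
     0, y 3, y 4, 0, 0, 0, y 6;
     y 3, 0, 0, 0, -y 5, -y 6, 0]

section gens
variable [CharP F 3]

theorem three0 : (3 : F) = 0 := by exact_mod_cast CharP.cast_eq_zero F 3

theorem tr7 (M : Matrix (Fin 7) (Fin 7) F) : Mᵀ = !![M 0 0, M 1 0, M 2 0, M 3 0, M 4 0, M 5 0, M 6 0;
  M 0 1, M 1 1, M 2 1, M 3 1, M 4 1, M 5 1, M 6 1;
  M 0 2, M 1 2, M 2 2, M 3 2, M 4 2, M 5 2, M 6 2;
  M 0 3, M 1 3, M 2 3, M 3 3, M 4 3, M 5 3, M 6 3;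
  M 0 4, M 1 4, M 2 4, M 3 4, M 4 4, M 5 4, M 6 4;
  M 0 5, M 1 5, M 2 5, M 3 5, M 4 5, M 5 5, M 6 5;
  M 0 6, M 1 6, M 2 6, M 3 6, M 4 6, M 5 6, M 6 6] := by
  ext i j
  fin_cases i <;> fin_cases j <;> rfl
set_option maxHeartbeats 4000000

theorem am_form (a A : F) : am a A * J * (am a A)ᵀ = J := by
  have h3 : (3 : F) = 0 := three0
  rw [tr7]
  simp only [J, am]
  simp [Matrix.vecHead, Matrix.vecTail, -mul_eq_zero]
  repeat' apply And.intro
  all_goals grind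

theorem am_kap (a A : F) (x : Fin 7 → F) :
    (am a A)ᵀ * kap x * am a A = kap (x ᵥ* am a A) := by
  have h3 : (3 : F) = 0 := three0
  rw [tr7]
  simp only [kap, am]
  simp [Matrix.vecHead, Matrix.vecTail, Matrix.vecMul, dotProduct, Fin.sum_univ_seven,
    -mul_eq_zero]
  repeat' apply And.intro
  all_goals grind

theorem am_om (a A : F) (Y : Fin 7 → F) :
    (am a A)ᵀ * om Y * am a A = om (Y ᵥ* am (A ^ 3) a) + kap
     ![Y 0*(a*A)+Y 1*A,
      -(Y 0*(a*A^2))-Y 1*A^2,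
      0,
      -(Y 0*(a^2*A^3))-Y 1*(a*A^3)+Y 2*a,
      -(Y 0*(a^2*A^4))-Y 1*(a*A^4)+Y 2*(a*A),
      -(Y 0*(a^3*A^4))-Y 1*(a^2*A^4)-Y 2*(a^2*A)+Y 3*(a*A)+Y 4*A,
      -(Y 0*(a^3*A^5))-Y 1*(a^2*A^5)-Y 2*(a^2*A^2)+Y 3*(a*A^2)+Y 4*A^2] := by
  have h3 : (3 : F) = 0 := three0
  rw [tr7]
  simp only [kap, om, am]
  simp [Matrix.vecHead, Matrix.vecTail, Matrix.vecMul, dotProduct, Fin.sum_univ_seven,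
    -mul_eq_zero]
  repeat' apply And.intro
  all_goals grind


theorem bm_form (a A : F) : bm a A * J * (bm a A)ᵀ = J := by
  have h3 : (3 : F) = 0 := three0
  rw [tr7]
  simp only [J, bm]
  simp [Matrix.vecHead, Matrix.vecTail, -mul_eq_zero]
  repeat' apply And.intro
  all_goals grind

theorem bm_kap (a A : F) (x : Fin 7 → F) :
    (bm a A)ᵀ * kap x * bm a A = kap (x ᵥ* bm a A) := by
  have h3 : (3 : F) = 0 := three0
  rw [tr7]
  simp only [kap, bm]
  simp [Matrix.vecHead, Matrix.vecTail, Matrix.vecMul, dotProduct, Fin.sum_univ_seven,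
    -mul_eq_zero]
  repeat' apply And.intro
  all_goals grind

theorem bm_om (a A : F) (Y : Fin 7 → F) :
    (bm a A)ᵀ * om Y * bm a A = om (Y ᵥ* bm (A ^ 3) a) + kap
     ![Y 0*A,
      0,
      Y 0*A^2,
      -(Y 1*a),
      -(Y 0*(a*A))+Y 2*A,
      Y 3*A,
      Y 0*(a*A^2)-Y 2*A^2] := by
  have h3 : (3 : F) = 0 := three0
  rw [tr7]
  simp only [kap, om, bm]
  simp [Matrix.vecHead, Matrix.vecTail, Matrix.vecMul, dotProduct, Fin.sum_univ_seven,
    -mul_eq_zero]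
  repeat' apply And.intro
  all_goals grind


theorem cm_form (a A : F) : cm a A * J * (cm a A)ᵀ = J := by
  have h3 : (3 : F) = 0 := three0
  rw [tr7]
  simp only [J, cm]
  simp [Matrix.vecHead, Matrix.vecTail, -mul_eq_zero]
  repeat' apply And.intro
  all_goals grind

theorem cm_kap (a A : F) (x : Fin 7 → F) :
    (cm a A)ᵀ * kap x * cm a A = kap (x ᵥ* cm a A) := by
  have h3 : (3 : F) = 0 := three0
  rw [tr7]
  simp only [kap, cm]
  simp [Matrix.vecHead, Matrix.vecTail, Matrix.vecMul, dotProduct, Fin.sum_univ_seven,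
    -mul_eq_zero]
  repeat' apply And.intro
  all_goals grind

theorem cm_om (a A : F) (Y : Fin 7 → F) :
    (cm a A)ᵀ * om Y * cm a A = om (Y ᵥ* cm (A ^ 3) a) + kap
     ![0,
      -(Y 0*A),
      -(Y 1*A),
      0,
      -(Y 0*A^2),
      Y 1*A^2,
      -(Y 0*(a*A))+Y 3*A] := by
  have h3 : (3 : F) = 0 := three0
  rw [tr7]
  simp only [kap, om, cm]
  simp [Matrix.vecHead, Matrix.vecTail, Matrix.vecMul, dotProduct, Fin.sum_univ_seven,
    -mul_eq_zero]
  repeat' apply And.intro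
  all_goals grind


theorem ups_form : (ups : Matrix (Fin 7) (Fin 7) F) * J * (ups : Matrix (Fin 7) (Fin 7) F)ᵀ = J := by
  rw [tr7]
  simp only [J, ups]
  simp [Matrix.vecHead, Matrix.vecTail, -mul_eq_zero]

theorem ups_kap (x : Fin 7 → F) :
    (ups : Matrix (Fin 7) (Fin 7) F)ᵀ * kap x * (ups : Matrix (Fin 7) (Fin 7) F) = kap (x ᵥ* (ups : Matrix (Fin 7) (Fin 7) F)) := by
  rw [tr7]
  simp only [kap, ups]
  simp [Matrix.vecHead, Matrix.vecTail, Matrix.vecMul, dotProduct, Fin.sum_univ_seven,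
    -mul_eq_zero]

theorem ups_om (Y : Fin 7 → F) :
    (ups : Matrix (Fin 7) (Fin 7) F)ᵀ * om Y * ups = om (Y ᵥ* ups) := by
  rw [tr7]
  simp only [om, ups]
  simp [Matrix.vecHead, Matrix.vecTail, Matrix.vecMul, dotProduct, Fin.sum_univ_seven,
    -mul_eq_zero]
  ext i
  fin_cases i <;> rfl


/-- The torus elements. -/
def hm (u A : F) : Matrix (Fin 7) (Fin 7) F :=
  Matrix.diagonal ![A, u * A⁻¹, A ^ 2 * u⁻¹, 1, u * (A ^ 2)⁻¹, A * u⁻¹, A⁻¹]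

theorem hm_form (u A : F) (hu : u ≠ 0) (hA : A ≠ 0) : hm u A * J * (hm u A)ᵀ = J := by
  ext i j
  simp only [hm, Matrix.diagonal_transpose, Matrix.mul_diagonal, Matrix.diagonal_mul]
  fin_cases i <;> fin_cases j <;> simp [J] <;> field_simp

theorem hm_kap (u A : F) (hu : u ≠ 0) (hA : A ≠ 0) (x : Fin 7 → F) :
    (hm u A)ᵀ * kap x * hm u A = kap (x ᵥ* hm u A) := by
  ext i j
  simp only [hm, Matrix.diagonal_transpose, Matrix.mul_diagonal, Matrix.diagonal_mul]
  fin_cases i <;> fin_cases j <;> simp [kap, Matrix.vecMul_diagonal] <;> field_simp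

theorem hm_om (u A : F) (hu : u ≠ 0) (hA : A ≠ 0) (Y : Fin 7 → F) :
    (hm u A)ᵀ * om Y * hm u A = om (Y ᵥ* hm (A ^ 3) u) := by
  ext i j
  simp only [hm, Matrix.diagonal_transpose, Matrix.mul_diagonal, Matrix.diagonal_mul]
  fin_cases i <;> fin_cases j <;> simp [om, Matrix.vecMul_diagonal] <;> field_simp

end gens

theorem J_mul_J : (J : Matrix (Fin 7) (Fin 7) F) * J = 1 := by
  ext i j
  fin_cases i <;> fin_cases j <;> simp [J, Matrix.mul_apply, Fin.sum_univ_seven]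

theorem kap_add (x y : Fin 7 → F) : kap (x + y) = kap x + kap y := by
  ext i j
  fin_cases i <;> fin_cases j <;> simp [kap] <;> ring

theorem kap_neg (x : Fin 7 → F) : kap (-x) = -kap x := by
  ext i j
  fin_cases i <;> fin_cases j <;> simp [kap]

theorem kap_zero : kap (0 : Fin 7 → F) = 0 := by
  ext i j
  fin_cases i <;> fin_cases j <;> simp [kap]

/-- The defining properties of the (full) twisted group. -/
structure Good (Φ : F →+* F) (g : Matrix (Fin 7) (Fin 7) F) : Prop where
  form : g * J * gᵀ = J
  kapp : ∀ x, gᵀ * kap x * g = kap (x ᵥ* g)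
  omm : ∀ y : Fin 7 → F, ∃ z, gᵀ * om (Φ ∘ y) * g = om (Φ ∘ (y ᵥ* g)) + kap z

theorem Good.one (Φ : F →+* F) : Good Φ (1 : Matrix (Fin 7) (Fin 7) F) where
  form := by simp
  kapp := by simp
  omm := fun y => ⟨0, by simp [kap_zero]⟩

theorem Good.mul {Φ : F →+* F} {g k : Matrix (Fin 7) (Fin 7) F} (hg : Good Φ g)
    (hk : Good Φ k) : Good Φ (g * k) where
  form := by
    rw [Matrix.transpose_mul]
    calc g * k * J * (kᵀ * gᵀ) = g * (k * J * kᵀ) * gᵀ := by simp only [Matrix.mul_assoc]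
      _ = J := by rw [hk.form, hg.form]
  kapp := fun x => by
    rw [Matrix.transpose_mul]
    calc kᵀ * gᵀ * kap x * (g * k) = kᵀ * (gᵀ * kap x * g) * k := by
          simp only [Matrix.mul_assoc]
      _ = _ := by rw [hg.kapp, hk.kapp, Matrix.vecMul_vecMul]
  omm := fun y => by
    obtain ⟨z, hz⟩ := hg.omm y
    obtain ⟨z', hz'⟩ := hk.omm (y ᵥ* g)
    refine ⟨z' + z ᵥ* k, ?_⟩
    rw [Matrix.transpose_mul]
    calc kᵀ * gᵀ * om (Φ ∘ y) * (g * k) = kᵀ * (gᵀ * om (Φ ∘ y) * g) * k := by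
          simp only [Matrix.mul_assoc]
      _ = _ := by
        rw [hz, Matrix.mul_add, Matrix.add_mul, hz', hk.kapp, kap_add, add_assoc,
          Matrix.vecMul_vecMul]

theorem Good.inv {Φ : F →+* F} {g k : Matrix (Fin 7) (Fin 7) F} (hg : Good Φ g)
    (h : g * k = 1) : Good Φ k := by
  have h' : k * g = 1 := mul_eq_one_comm.mp h
  have ht : kᵀ * gᵀ = 1 := by rw [← Matrix.transpose_mul, h, Matrix.transpose_one]
  have ht' : gᵀ * kᵀ = 1 := by rw [← Matrix.transpose_mul, h', Matrix.transpose_one]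
  have cancel : ∀ M : Matrix (Fin 7) (Fin 7) F, kᵀ * (gᵀ * M * g) * k = M := by
    intro M
    calc kᵀ * (gᵀ * M * g) * k = (kᵀ * gᵀ) * M * (g * k) := by simp only [Matrix.mul_assoc]
      _ = M := by rw [ht, h, Matrix.one_mul, Matrix.mul_one]
  have kk : ∀ x, kᵀ * kap x * k = kap (x ᵥ* k) := by
    intro x
    have := hg.kapp (x ᵥ* k)
    rw [Matrix.vecMul_vecMul, h', Matrix.vecMul_one] at this
    rw [← this, cancel]
  refine ⟨?_, kk, ?_⟩
  · have := hg.form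
    calc k * J * kᵀ = k * (g * J * gᵀ) * kᵀ := by rw [this]
      _ = (k * g) * J * (gᵀ * kᵀ) := by simp only [Matrix.mul_assoc]
      _ = J := by rw [h', ht', Matrix.one_mul, Matrix.mul_one]
  · intro y
    obtain ⟨z, hz⟩ := hg.omm (y ᵥ* k)
    rw [Matrix.vecMul_vecMul, h', Matrix.vecMul_one] at hz
    refine ⟨-(z ᵥ* k), ?_⟩
    have : om (Φ ∘ y) = gᵀ * om (Φ ∘ (y ᵥ* k)) * g - kap z := by rw [hz]; simp
    rw [this, Matrix.mul_sub, Matrix.sub_mul, cancel, kk, kap_neg, sub_eq_add_neg]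

theorem good_of {Φ : F →+* F} {g g' : Matrix (Fin 7) (Fin 7) F} (h1 : g * J * gᵀ = J)
    (h2 : ∀ x, gᵀ * kap x * g = kap (x ᵥ* g)) (hm : g.map Φ = g')
    (h3 : ∀ Y, ∃ z, gᵀ * om Y * g = om (Y ᵥ* g') + kap z) : Good Φ g := by
  refine ⟨h1, h2, fun y => ?_⟩
  obtain ⟨z, hz⟩ := h3 (Φ ∘ y)
  refine ⟨z, ?_⟩
  rw [hz, ← hm]
  congr 2
  ext i
  simp [Matrix.vecMul, dotProduct]

set_option maxHeartbeats 4000000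

/-- The points of the Ree--Tits ovoid. -/
structure IsPt (Φ : F →+* F) (x : Fin 7 → F) : Prop where
  iso : 2 * (x 0 * x 6 + x 1 * x 5 + x 2 * x 4) = x 3 ^ 2
  tan : ∃ y z : Fin 7 → F, ∀ i j, x i * y j - y i * x j =
    (om (Φ ∘ x) + kap z : Matrix (Fin 7) (Fin 7) F) i j

theorem form_apply (g : Matrix (Fin 7) (Fin 7) F) (hg : g * J * gᵀ = J) (i j : Fin 7) :
    g i 0 * g j 6 + g i 1 * g j 5 + g i 2 * g j 4 - g i 3 * g j 3 + g i 4 * g j 2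
      + g i 5 * g j 1 + g i 6 * g j 0 = J i j := by
  rw [← hg]
  simp [J, Matrix.mul_apply, Fin.sum_univ_seven]
  ring

theorem Good.plane {Φ : F →+* F} {g : Matrix (Fin 7) (Fin 7) F} (hg : Good Φ g) (k : Fin 7) :
    ∃ z, ∀ i j, (∑ p, ∑ q, g p i * om (Pi.single k 1) p q * g q j)
      = (om (Φ ∘ g k) + kap z : Matrix (Fin 7) (Fin 7) F) i j := by
  obtain ⟨z, hz⟩ := hg.omm (Pi.single k 1)
  refine ⟨z, fun i j => ?_⟩
  have e1 : Φ ∘ (Pi.single k 1 : Fin 7 → F) = Pi.single k 1 := by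
    ext i
    by_cases h : i = k
    · subst h; simp
    · simp [h]
  rw [Matrix.single_one_vecMul, e1] at hz
  have : (gᵀ * om (Pi.single k 1) * g : Matrix (Fin 7) (Fin 7) F) i j = (om (Φ ∘ g k) + kap z : Matrix (Fin 7) (Fin 7) F) i j := by
    rw [hz]; rfl
  rw [← this]
  simp only [Matrix.mul_apply, Finset.sum_mul, Matrix.transpose_apply]
  rw [Finset.sum_comm]

theorem Good.pt0 {Φ : F →+* F} {g : Matrix (Fin 7) (Fin 7) F} (hg : Good Φ g) :
    IsPt Φ (g 0) := by
  refine ⟨?_, g 1, ?_⟩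
  · have := form_apply g hg.form 0 0
    simp [J] at this
    linear_combination this
  · obtain ⟨z, hz⟩ := hg.plane 0
    refine ⟨z, fun i j => ?_⟩
    rw [← hz]
    simp [om, Fin.sum_univ_seven]
    ring

theorem Good.pt6 {Φ : F →+* F} {g : Matrix (Fin 7) (Fin 7) F} (hg : Good Φ g) :
    IsPt Φ (g 6) := by
  refine ⟨?_, -g 5, ?_⟩
  · have := form_apply g hg.form 6 6
    simp [J] at this
    linear_combination this
  · obtain ⟨z, hz⟩ := hg.plane 6
    refine ⟨z, fun i j => ?_⟩
    rw [← hz]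
    simp [om, Fin.sum_univ_seven]
    ring

theorem IsPt.clear [CharP F 3] {Φ : F →+* F} {x : Fin 7 → F} (hx : IsPt Φ x) (h0 : x 0 ≠ 0)
    (h1 : x 1 = 0) (h2 : x 2 = 0) (h3 : x 3 = 0) : x 4 = 0 ∧ x 5 = 0 ∧ x 6 = 0 := by
  have t3 : (3 : F) = 0 := three0
  obtain ⟨iso, y, z, e⟩ := hx
  have hx6 : x 6 = 0 := by
    rw [h1, h2, h3] at iso
    have : x 0 * x 6 = 0 := by linear_combination t3 * x 0 * x 6 - iso
    simpa [h0] using this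
  have e01 := e 0 1
  have e02 := e 0 2
  have e12 := e 1 2
  have e13 := e 1 3
  have e23 := e 2 3
  have e14 := e 1 4
  have e24 := e 2 4
  have e15 := e 1 5
  simp [om, kap, h1, h2, h3] at e01 e02 e12 e13 e23 e14 e24 e15
  have hΦ : Φ (x 0) ≠ 0 := by simpa using h0
  have hy1 : y 1 ≠ 0 := by
    intro h
    rw [h, mul_zero] at e01
    exact hΦ e01.symm
  have hy2 : y 2 = 0 := e02.resolve_left h0
  have hx4 : x 4 = 0 := e14.resolve_left hy1
  rw [hy2, zero_mul] at e24
  rw [← e24] at e15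
  have hx5 : x 5 = 0 := by simpa [hy1] using e15
  exact ⟨hx4, hx5, hx6⟩

theorem IsPt.inf {Φ : F →+* F} {x : Fin 7 → F} (hx : IsPt Φ x) (h0 : x 0 = 0) :
    x 1 = 0 ∧ x 2 = 0 ∧ x 3 = 0 ∧ x 4 = 0 ∧ x 5 = 0 := by
  obtain ⟨iso, y, z, e⟩ := hx
  have inj : ∀ a, Φ a = 0 → a = 0 := fun a h => by simpa using h
  have e01 := e 0 1
  have e02 := e 0 2
  have e03 := e 0 3
  have e04 := e 0 4
  have e05 := e 0 5
  have e06 := e 0 6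
  have e12 := e 1 2
  have e13 := e 1 3
  have e23 := e 2 3
  have e14 := e 1 4
  have e24 := e 2 4
  have e15 := e 1 5
  have e25 := e 2 5
  have e26 := e 2 6
  have e35 := e 3 5
  have e36 := e 3 6
  have e45 := e 4 5
  have e46 := e 4 6
  clear e
  have h1 : x 1 = 0 := by
    by_contra h
    simp [om, kap, h0, h] at e01 e02
    rw [e01] at e02
    simp at e02
    exact h (inj _ e02.symm)
  have h2 : x 2 = 0 := by
    by_contra h
    simp [om, kap, h0, h1, h] at e02 e03 e12 e14
    rw [e02] at e03
    simp at e03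
    rw [← e03] at e12
    simp [h] at e12
    rw [e12] at e14
    simp at e14
    exact h (inj _ e14.symm)
  have h3 : x 3 = 0 := by
    rw [h0, h1, h2] at iso
    simpa using iso.symm
  have h4 : x 4 = 0 := by
    by_contra h
    have hh : Φ (x 4) ≠ 0 := fun h' => h (inj _ h')
    simp [om, kap, h0, h1, h2, h3, h] at e03 e04 e05 e06 e12 e13 e23 e14 e24 e15 e25 e26 e35
    clear iso
    grind
  have h5 : x 5 = 0 := by
    by_contra h
    have hh : Φ (x 5) ≠ 0 := fun h' => h (inj _ h')
    simp [om, kap, h0, h1, h2, h3, h4, h] at e03 e04 e05 e06 e12 e13 e23 e24 e15 e25 e26 e35 e36 e45 e46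
    clear iso
    grind
  exact ⟨h1, h2, h3, h4, h5⟩

theorem Good.diag {t : ℕ} {Φ : F →+* F} (hΦ : ∀ x, Φ x = (x ^ t) ^ 3) (hΦ' : ∀ x, Φ (x ^ t) = x)
    {g : Matrix (Fin 7) (Fin 7) F} (hg : Good Φ g)
    (h0 : ∀ j, j ≠ 0 → g 0 j = 0) (h6 : ∀ j, j ≠ 6 → g 6 j = 0) :
    ∃ u : F, u ≠ 0 ∧ g = hm u (u ^ t) := by
  have fm := form_apply g hg.form
  obtain ⟨z0, e0⟩ := hg.plane 0
  obtain ⟨z1, e1⟩ := hg.plane 1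
  obtain ⟨z5, e5⟩ := hg.plane 5
  obtain ⟨z6, e6⟩ := hg.plane 6
  have g01 := h0 1 (by decide)
  have g02 := h0 2 (by decide)
  have g03 := h0 3 (by decide)
  have g04 := h0 4 (by decide)
  have g05 := h0 5 (by decide)
  have g06 := h0 6 (by decide)
  have g60 := h6 0 (by decide)
  have g61 := h6 1 (by decide)
  have g62 := h6 2 (by decide)
  have g63 := h6 3 (by decide)
  have g64 := h6 4 (by decide)
  have g65 := h6 5 (by decide)
  have d06 := fm 0 6
  simp [J, g01, g02, g03, g04, g05, g06] at d06
  have n0 : g 0 0 ≠ 0 := left_ne_zero_of_mul_eq_one d06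
  have n6 : g 6 6 ≠ 0 := right_ne_zero_of_mul_eq_one d06
  -- columns 0 and 6
  have g16 := fm 1 0
  have g26 := fm 2 0
  have g36 := fm 3 0
  have g46 := fm 4 0
  have g56 := fm 5 0
  have g10 := fm 1 6
  have g20 := fm 2 6
  have g30 := fm 3 6
  have g40 := fm 4 6
  have g50 := fm 5 6
  simp [J, g01, g02, g03, g04, g05, g06, g60, g61, g62, g63, g64, g65, n0, n6]
    at g16 g26 g36 g46 g56 g10 g20 g30 g40 g50
  -- row 1
  have a01 := e0 0 1
  have a02 := e0 0 2
  have a03 := e0 0 3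
  have a04 := e0 0 4
  have a05 := e0 0 5
  have a12 := e0 1 2
  have a13 := e0 1 3
  have a23 := e0 2 3
  simp [om, kap, Fin.sum_univ_seven, g01, g02, g03, g04, g05, g06, n0, g10]
    at a01 a02 a12 a13 a23
  simp [om, kap, Fin.sum_univ_seven, g01, g02, g03, g04, g05, g06, n0, g10, ← a12, a13, a23]
    at a03 a04 a05
  -- row 2
  have b01 := e1 0 1
  have b02 := e1 0 2
  have b03 := e1 0 3
  have b04 := e1 0 4
  have b05 := e1 0 5
  have b12 := e1 1 2
  have b13 := e1 1 3
  have b23 := e1 2 3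
  simp [om, kap, Fin.sum_univ_seven, g01, g02, g03, g04, g05, g06, n0, g10, g20]
    at b01 b02 b12 b13 b23
  simp [om, kap, Fin.sum_univ_seven, g01, g02, g03, g04, g05, g06, n0, g10, g20, ← b12, b13, b23]
    at b03 b04 b05
  -- row 5
  have c56 := e6 5 6
  have c46 := e6 4 6
  have c36 := e6 3 6
  have c26 := e6 2 6
  have c16 := e6 1 6
  have c45 := e6 4 5
  have c35 := e6 3 5
  have c34 := e6 3 4
  simp [om, kap, Fin.sum_univ_seven, g60, g61, g62, g63, g64, g65, n6, g56]
    at c56 c46 c45 c35 c34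
  simp [om, kap, Fin.sum_univ_seven, g60, g61, g62, g63, g64, g65, n6, g56, c34, c35, ← c45]
    at c36 c26 c16
  -- row 4
  have f56 := e5 5 6
  have f46 := e5 4 6
  have f36 := e5 3 6
  have f26 := e5 2 6
  have f16 := e5 1 6
  have f45 := e5 4 5
  have f35 := e5 3 5
  have f34 := e5 3 4
  simp [om, kap, Fin.sum_univ_seven, g60, g61, g62, g63, g64, g65, n6, g56, g46]
    at f56 f46 f45 f35 f34
  simp [om, kap, Fin.sum_univ_seven, g60, g61, g62, g63, g64, g65, n6, g56, g46, f34, f35, ← f45]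
    at f36 f26 f16
  have d15 := fm 1 5
  simp [J, g10, g16, a02, a03, a04, a05] at d15
  have d24 := fm 2 4
  simp [J, g20, g26, b01, b03, b04, b05] at d24
  have n1 : g 1 1 ≠ 0 := left_ne_zero_of_mul_eq_one d15
  have n5 : g 5 5 ≠ 0 := right_ne_zero_of_mul_eq_one d15
  have n2 : g 2 2 ≠ 0 := left_ne_zero_of_mul_eq_one d24
  have n4 : g 4 4 ≠ 0 := right_ne_zero_of_mul_eq_one d24
  have g31 := fm 3 5
  have g32 := fm 3 4
  have g34 := fm 3 2
  have g35 := fm 3 1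
  simp [J, g10, g16, a02, a03, a04, a05, n1] at g35
  simp [J, g20, g26, b01, b03, b04, b05, n2] at g34
  simp [J, g50, g56, c16, c26, c36, c46, n5] at g31
  simp [J, g40, g46, f16, f26, f36, f56, n4] at g32
  have g33 : g 3 3 = 1 := by
    have := congrFun (congrFun (hg.kapp (Pi.single 0 1)) 0) 3
    simpa [kap, Matrix.mul_apply, Fin.sum_univ_seven, g10, g20, g30, g40, g50, g60, n0] using this
  have hA : (Φ (g 0 0)) ^ t = g 0 0 := by rw [← map_pow, hΦ']
  have hu : Φ (g 0 0) ≠ 0 := by simpa using n0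
  have hΦu : Φ (Φ (g 0 0)) = g 0 0 ^ 3 := by rw [hΦ (Φ (g 0 0)), hA]
  have r1 : g 1 1 = Φ (g 0 0) * (g 0 0)⁻¹ := by field_simp; linear_combination a01
  have r2 : g 2 2 = g 0 0 ^ 2 * (Φ (g 0 0))⁻¹ := by
    rw [r1, map_mul, map_inv₀, hΦu] at b02
    have : g 0 0 * g 2 2 = g 0 0 * (g 0 0 ^ 2 * (Φ (g 0 0))⁻¹) := by rw [b02]; ring
    exact mul_left_cancel₀ n0 this
  have r6 : g 6 6 = (g 0 0)⁻¹ := eq_inv_of_mul_eq_one_right d06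
  have r5 : g 5 5 = g 0 0 * (Φ (g 0 0))⁻¹ := by
    rw [eq_inv_of_mul_eq_one_right d15, r1, mul_inv, inv_inv, mul_comm]
  have r4 : g 4 4 = Φ (g 0 0) * (g 0 0 ^ 2)⁻¹ := by
    rw [eq_inv_of_mul_eq_one_right d24, r2, mul_inv, inv_inv, mul_comm]
  refine ⟨Φ (g 0 0), hu, ?_⟩
  rw [hA]
  clear e0 e1 e5 e6 fm
  ext i j
  fin_cases i <;> fin_cases j <;> simp [hm, *]

theorem amat_eq (t : ℕ) (x : F) : amat t x = am x (x ^ t) := by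
  ext i j
  fin_cases i <;> fin_cases j <;> simp [amat, am] <;> ring

theorem bmat_eq (t : ℕ) (x : F) : bmat t x = bm x (x ^ t) := by
  ext i j
  fin_cases i <;> fin_cases j <;> simp [bmat, bm] <;> ring

theorem cmat_eq (t : ℕ) (x : F) : cmat t x = cm x (x ^ t) := by
  ext i j
  fin_cases i <;> fin_cases j <;> simp [cmat, cm] <;> ring

theorem hmat_eq (t : ℕ) (l : Fˣ) : hmat t l = hm (l : F) ((l : F) ^ t) := by
  have hl : (l : F) ≠ 0 := l.ne_zero
  unfold hmat hm
  congr 1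
  ext i
  fin_cases i <;> simp [zpow_sub₀ hl, div_eq_mul_inv] <;> field_simp
  all_goals simp [← pow_mul, mul_comm]
  all_goals exact_mod_cast zpow_natCast (l : F) (t * 2)

section good
variable [CharP F 3] {t : ℕ} {Φ : F →+* F}

theorem amat_good (hΦ : ∀ x, Φ x = (x ^ t) ^ 3) (hΦ' : ∀ x, Φ (x ^ t) = x) (x : F) :
    Good Φ (amat t x) := by
  have h1 := hΦ x
  have h2 := hΦ' x
  rw [amat_eq]
  generalize x ^ t = A at *
  refine good_of (g' := am (A ^ 3) x) (am_form _ _) (am_kap _ _) ?_ (fun Y => ⟨_, am_om _ _ Y⟩)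
  ext i j
  fin_cases i <;> fin_cases j <;> simp [am, h1, h2]

theorem bmat_good (hΦ : ∀ x, Φ x = (x ^ t) ^ 3) (hΦ' : ∀ x, Φ (x ^ t) = x) (x : F) :
    Good Φ (bmat t x) := by
  have h1 := hΦ x
  have h2 := hΦ' x
  rw [bmat_eq]
  generalize x ^ t = A at *
  refine good_of (g' := bm (A ^ 3) x) (bm_form _ _) (bm_kap _ _) ?_ (fun Y => ⟨_, bm_om _ _ Y⟩)
  ext i j
  fin_cases i <;> fin_cases j <;> simp [bm, h1, h2]

theorem cmat_good (hΦ : ∀ x, Φ x = (x ^ t) ^ 3) (hΦ' : ∀ x, Φ (x ^ t) = x) (x : F) :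
    Good Φ (cmat t x) := by
  have h1 := hΦ x
  have h2 := hΦ' x
  rw [cmat_eq]
  generalize x ^ t = A at *
  refine good_of (g' := cm (A ^ 3) x) (cm_form _ _) (cm_kap _ _) ?_ (fun Y => ⟨_, cm_om _ _ Y⟩)
  ext i j
  fin_cases i <;> fin_cases j <;> simp [cm, h1, h2]

theorem hmat_good (hΦ : ∀ x, Φ x = (x ^ t) ^ 3) (hΦ' : ∀ x, Φ (x ^ t) = x) (l : Fˣ) :
    Good Φ (hmat t l) := by
  have h1 := hΦ l
  have h2 := hΦ' l
  have n1 : (l : F) ≠ 0 := l.ne_zero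
  have n2 : (l : F) ^ t ≠ 0 := pow_ne_zero _ n1
  rw [hmat_eq]
  generalize (l : F) ^ t = A at *
  refine good_of (g' := hm (A ^ 3) l) (hm_form _ _ n1 n2) (hm_kap _ _ n1 n2) ?_
    (fun Y => ⟨0, by rw [hm_om _ _ n1 n2 Y, kap_zero, add_zero]⟩)
  rw [hm, Matrix.diagonal_map (map_zero Φ), hm]
  congr 1
  ext i
  fin_cases i <;> simp [h1, h2]

theorem ups_good : Good Φ (ups : Matrix (Fin 7) (Fin 7) F) := by
  refine good_of (g' := ups) ups_form ups_kap ?_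
    (fun Y => ⟨0, by rw [ups_om Y, kap_zero, add_zero]⟩)
  ext i j
  fin_cases i <;> fin_cases j <;> simp [ups]

end good

/-- Lift of a form-preserving matrix to `GL`. -/
def lift (g : Matrix (Fin 7) (Fin 7) F) (h : g * J * gᵀ = J) : GL (Fin 7) F where
  val := g
  inv := J * gᵀ * J
  val_inv := by
    rw [← Matrix.mul_assoc, ← Matrix.mul_assoc, h, J_mul_J]
  inv_val := by
    apply mul_eq_one_comm.mp
    rw [← Matrix.mul_assoc, ← Matrix.mul_assoc, h, J_mul_J]

theorem ree_good [CharP F 3] {t : ℕ} {Φ : F →+* F} (hΦ : ∀ x, Φ x = (x ^ t) ^ 3)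
    (hΦ' : ∀ x, Φ (x ^ t) = x) (g : GL (Fin 7) F) (hg : g ∈ ReeGroup (F := F) t) :
    Good Φ (g : Matrix (Fin 7) (Fin 7) F) := by
  unfold ReeGroup at hg
  induction hg using Subgroup.closure_induction with
  | mem g h =>
    rcases h with ⟨x, h⟩ | ⟨x, h⟩ | ⟨x, h⟩ | ⟨x, h⟩ | h
    · rw [h]; exact amat_good hΦ hΦ' x
    · rw [h]; exact bmat_good hΦ hΦ' x
    · rw [h]; exact cmat_good hΦ hΦ' x
    · rw [h]; exact hmat_good hΦ hΦ' x
    · rw [h]; exact ups_good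
  | one => exact Good.one Φ
  | mul g k _ _ h1 h2 => exact h1.mul h2
  | inv g _ h => exact h.inv (by rw [← Units.val_mul, mul_inv_cancel, Units.val_one])

/-- Coordinates of `v S(a,b,c)`. -/
theorem S_coords (t : ℕ) (v : Fin 7 → F) (a b c : F) :
    (v ᵥ* Smat t a b c) 0 = v 0 ∧
    (v ᵥ* Smat t a b c) 1 = v 1 + v 0 * a ^ t ∧
    (v ᵥ* Smat t a b c) 2 = v 2 + v 1 * a - v 0 * b ^ t ∧
    (v ᵥ* Smat t a b c) 3 = v 3 + v 2 * a ^ t + v 1 * a ^ (t + 1) +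
      (v 1 + v 0 * a ^ t) * b ^ t - v 0 * c ^ t := by
  unfold Smat
  rw [← Matrix.vecMul_vecMul, ← Matrix.vecMul_vecMul]
  refine ⟨?_, ?_, ?_, ?_⟩ <;>
    simp [amat, bmat, cmat, Matrix.vecMul, dotProduct, Fin.sum_univ_seven] <;> ring

theorem S_row6 (t : ℕ) (a b c : F) (j : Fin 7) : Smat t a b c 6 j = (1 : Matrix (Fin 7) (Fin 7) F) 6 j := by
  unfold Smat
  fin_cases j <;> simp [amat, bmat, cmat, Matrix.mul_apply, Fin.sum_univ_seven]
  all_goals rfl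

theorem S_exists {t : ℕ} (sur : ∀ y : F, ∃ x, x ^ t = y) (v : Fin 7 → F) (h : v 0 ≠ 0) :
    ∃ a b c, (v ᵥ* Smat t a b c) 1 = 0 ∧ (v ᵥ* Smat t a b c) 2 = 0 ∧
      (v ᵥ* Smat t a b c) 3 = 0 := by
  obtain ⟨a, ha⟩ := sur (-v 1 / v 0)
  obtain ⟨b, hb⟩ := sur ((v 2 + v 1 * a) / v 0)
  obtain ⟨c, hc⟩ := sur ((v 3 + v 2 * a ^ t + v 1 * a ^ (t + 1) +
      (v 1 + v 0 * a ^ t) * b ^ t) / v 0)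
  obtain ⟨-, h1, h2, h3⟩ := S_coords t v a b c
  refine ⟨a, b, c, ?_, ?_, ?_⟩
  · rw [h1, ha]; field_simp; ring
  · rw [h2, hb]; field_simp; ring
  · rw [h3, hc]; field_simp; ring

theorem S_unique {t : ℕ} (inj : ∀ x y : F, x ^ t = y ^ t → x = y) (v : Fin 7 → F) (h : v 0 ≠ 0)
    {a b c a' b' c' : F}
    (h1 : (v ᵥ* Smat t a b c) 1 = 0) (h2 : (v ᵥ* Smat t a b c) 2 = 0)
    (h3 : (v ᵥ* Smat t a b c) 3 = 0)
    (h1' : (v ᵥ* Smat t a' b' c') 1 = 0) (h2' : (v ᵥ* Smat t a' b' c') 2 = 0)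
    (h3' : (v ᵥ* Smat t a' b' c') 3 = 0) : a = a' ∧ b = b' ∧ c = c' := by
  obtain ⟨-, e1, e2, e3⟩ := S_coords t v a b c
  obtain ⟨-, e1', e2', e3'⟩ := S_coords t v a' b' c'
  rw [h1] at e1; rw [h2] at e2; rw [h3] at e3
  rw [h1'] at e1'; rw [h2'] at e2'; rw [h3'] at e3'
  have ha : a = a' := inj _ _ (mul_left_cancel₀ h (by linear_combination e1' - e1))
  subst ha
  have hb : b = b' := inj _ _ (mul_left_cancel₀ h (by linear_combination e2 - e2'))
  subst hb
  exact ⟨rfl, rfl, inj _ _ (mul_left_cancel₀ h (by linear_combination e3 - e3'))⟩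

section final
variable [CharP F 3]

def AG (t : ℕ) (x : F) : GL (Fin 7) F := lift (amat t x) (by rw [amat_eq]; exact am_form _ _)
def BG (t : ℕ) (x : F) : GL (Fin 7) F := lift (bmat t x) (by rw [bmat_eq]; exact bm_form _ _)
def CG (t : ℕ) (x : F) : GL (Fin 7) F := lift (cmat t x) (by rw [cmat_eq]; exact cm_form _ _)
def HG (t : ℕ) (l : Fˣ) : GL (Fin 7) F :=
  lift (hmat t l) (by rw [hmat_eq]; exact hm_form _ _ l.ne_zero (pow_ne_zero _ l.ne_zero))
def UG : GL (Fin 7) F := lift ups ups_form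
def SG (t : ℕ) (a b c : F) : GL (Fin 7) F := AG t a * BG t b * CG t c

theorem SG_val (t : ℕ) (a b c : F) :
    (SG t a b c : Matrix (Fin 7) (Fin 7) F) = Smat t a b c := rfl
theorem HG_val (t : ℕ) (l : Fˣ) : (HG t l : Matrix (Fin 7) (Fin 7) F) = hmat t l := rfl
theorem UG_val : ((UG : GL (Fin 7) F) : Matrix (Fin 7) (Fin 7) F) = ups := rfl

theorem SG_mem (t : ℕ) (a b c : F) : SG t a b c ∈ ReeGroup (F := F) t := by
  refine mul_mem (mul_mem ?_ ?_) ?_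
  · exact Subgroup.subset_closure (Or.inl ⟨a, rfl⟩)
  · exact Subgroup.subset_closure (Or.inr (Or.inl ⟨b, rfl⟩))
  · exact Subgroup.subset_closure (Or.inr (Or.inr (Or.inl ⟨c, rfl⟩)))

theorem HG_mem (t : ℕ) (l : Fˣ) : HG t l ∈ ReeGroup (F := F) t :=
  Subgroup.subset_closure (Or.inr (Or.inr (Or.inr (Or.inl ⟨l, rfl⟩))))

theorem UG_mem (t : ℕ) : (UG : GL (Fin 7) F) ∈ ReeGroup (F := F) t :=
  Subgroup.subset_closure (Or.inr (Or.inr (Or.inr (Or.inr rfl))))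

theorem UG_mul_UG : (UG : GL (Fin 7) F) * UG = 1 := by
  apply Units.ext
  rw [Units.val_mul, UG_val, Units.val_one]
  ext i j
  fin_cases i <;> fin_cases j <;> simp [ups, Matrix.mul_apply, Fin.sum_univ_seven]

/-- The Bruhat parametrization. -/
def bru (t : ℕ) : (Fˣ × F × F × F) ⊕ ((Fˣ × F × F × F) × (F × F × F)) → GL (Fin 7) F
  | Sum.inl p => HG t p.1 * (SG t p.2.1 p.2.2.1 p.2.2.2)⁻¹
  | Sum.inr p => HG t p.1.1 * (SG t p.1.2.1 p.1.2.2.1 p.1.2.2.2)⁻¹ * UG *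
      (SG t p.2.1 p.2.2.1 p.2.2.2)⁻¹

theorem bru_mem (t : ℕ) (p) : bru t p ∈ ReeGroup (F := F) t := by
  rcases p with p | p
  · exact mul_mem (HG_mem _ _) (inv_mem (SG_mem _ _ _ _))
  · exact mul_mem (mul_mem (mul_mem (HG_mem _ _) (inv_mem (SG_mem _ _ _ _))) (UG_mem _))
      (inv_mem (SG_mem _ _ _ _))

theorem SG_good {t : ℕ} {Φ : F →+* F} (hΦ : ∀ x, Φ x = (x ^ t) ^ 3) (hΦ' : ∀ x, Φ (x ^ t) = x)
    (a b c : F) : Good Φ (Smat t a b c) :=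
  ((amat_good hΦ hΦ' a).mul (bmat_good hΦ hΦ' b)).mul (cmat_good hΦ hΦ' c)

theorem borel {t : ℕ} {Φ : F →+* F} (hΦ : ∀ x, Φ x = (x ^ t) ^ 3) (hΦ' : ∀ x, Φ (x ^ t) = x)
    (g : GL (Fin 7) F) (hg : Good Φ (g : Matrix (Fin 7) (Fin 7) F))
    (h6 : ∀ j, j ≠ 6 → (g : Matrix (Fin 7) (Fin 7) F) 6 j = 0) :
    ∃ l a b c, g = HG t l * (SG t a b c)⁻¹ := by
  have sur : ∀ y : F, ∃ x, x ^ t = y := fun y => ⟨Φ y, by rw [← map_pow, hΦ']⟩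
  have n0 : (g : Matrix (Fin 7) (Fin 7) F) 0 0 ≠ 0 := by
    have := form_apply _ hg.form 0 6
    rw [h6 0 (by decide), h6 1 (by decide), h6 2 (by decide), h6 3 (by decide),
      h6 4 (by decide), h6 5 (by decide)] at this
    intro h
    simp [h, J] at this
  obtain ⟨a, b, c, h1, h2, h3⟩ := S_exists sur ((g : Matrix (Fin 7) (Fin 7) F) 0) n0
  have hk := hg.mul (SG_good hΦ hΦ' a b c)
  have r0 := (S_coords t ((g : Matrix (Fin 7) (Fin 7) F) 0) a b c).1
  rw [← Matrix.mul_apply_eq_vecMul] at h1 h2 h3 r0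
  obtain ⟨h4, h5, h6'⟩ := hk.pt0.clear (by rw [r0]; exact n0) h1 h2 h3
  obtain ⟨u, hu, e⟩ := hk.diag (t := t) hΦ hΦ' (by
      intro j hj
      fin_cases j
      · exact absurd rfl hj
      all_goals assumption) (by
      intro j hj
      rw [Matrix.mul_apply, Finset.sum_eq_single 6]
      · rw [S_row6, Matrix.one_apply_ne (Ne.symm hj), mul_zero]
      · intro k _ hk
        rw [h6 k hk, zero_mul]
      · simp)
  refine ⟨Units.mk0 u hu, a, b, c, ?_⟩
  rw [eq_mul_inv_iff_mul_eq]
  apply Units.ext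
  rw [Units.val_mul, SG_val, HG_val, e, hmat_eq]
  rfl

theorem bru_surj {t : ℕ} {Φ : F →+* F} (hΦ : ∀ x, Φ x = (x ^ t) ^ 3)
    (hΦ' : ∀ x, Φ (x ^ t) = x)
    (g : GL (Fin 7) F) (hg : Good Φ (g : Matrix (Fin 7) (Fin 7) F)) : ∃ p, bru t p = g := by
  have sur : ∀ y : F, ∃ x, x ^ t = y := fun y => ⟨Φ y, by rw [← map_pow, hΦ']⟩
  by_cases h0 : (g : Matrix (Fin 7) (Fin 7) F) 6 0 = 0
  · obtain ⟨h1, h2, h3, h4, h5⟩ := hg.pt6.inf h0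
    obtain ⟨l, a, b, c, e⟩ := borel hΦ hΦ' g hg (by
      intro j hj
      fin_cases j <;> first | assumption | exact absurd rfl hj)
    exact ⟨Sum.inl (l, a, b, c), e.symm⟩
  · obtain ⟨a', b', c', h1, h2, h3⟩ := S_exists sur ((g : Matrix (Fin 7) (Fin 7) F) 6) h0
    have hk := hg.mul (SG_good hΦ hΦ' a' b' c')
    have r0 := (S_coords t ((g : Matrix (Fin 7) (Fin 7) F) 6) a' b' c').1
    rw [← Matrix.mul_apply_eq_vecMul] at h1 h2 h3 r0
    obtain ⟨h4, h5, h6⟩ := hk.pt6.clear (by rw [r0]; exact h0) h1 h2 h3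
    have hk' := hk.mul ups_good
    obtain ⟨l, a, b, c, e⟩ := borel hΦ hΦ' (g * SG t a' b' c' * UG) hk' (by
      intro j hj
      rw [Units.val_mul, Units.val_mul, SG_val, UG_val, Matrix.mul_apply]
      fin_cases j <;> first | exact absurd rfl hj | simp [Fin.sum_univ_seven, ups, h1, h2, h3, h4, h5, h6])
    refine ⟨Sum.inr ((l, a, b, c), (a', b', c')), ?_⟩
    simp only [bru]
    rw [← e]
    rw [mul_assoc _ UG UG, UG_mul_UG, mul_one, mul_inv_cancel_right]

theorem bru_inl_inj {t : ℕ} (inj : ∀ x y : F, x ^ t = y ^ t → x = y) (p q : Fˣ × F × F × F)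
    (h : bru t (Sum.inl p) = bru t (Sum.inl q)) : p = q := by
  obtain ⟨l, a, b, c⟩ := p
  obtain ⟨l', a', b', c'⟩ := q
  simp only [bru] at h
  set g := HG t l * (SG t a b c)⁻¹ with hg
  have e1 : g * SG t a b c = HG t l := by rw [hg, inv_mul_cancel_right]
  have e2 : g * SG t a' b' c' = HG t l' := by rw [h, inv_mul_cancel_right]
  have m1 := congrArg (fun k : GL (Fin 7) F => (k : Matrix (Fin 7) (Fin 7) F) 0) e1
  have m2 := congrArg (fun k : GL (Fin 7) F => (k : Matrix (Fin 7) (Fin 7) F) 0) e2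
  simp only [Units.val_mul, SG_val, HG_val, Matrix.mul_apply_eq_vecMul, hmat_eq, hm] at m1 m2
  have n0 : (g : Matrix (Fin 7) (Fin 7) F) 0 0 ≠ 0 := by
    rw [← (S_coords t ((g : Matrix (Fin 7) (Fin 7) F) 0) a b c).1, m1]
    simp
  obtain ⟨rfl, rfl, rfl⟩ := S_unique inj ((g : Matrix (Fin 7) (Fin 7) F) 0) n0
    (by rw [m1]; simp) (by rw [m1]; simp) (by rw [m1]; simp) (by rw [m2]; simp)
    (by rw [m2]; simp) (by rw [m2]; simp : (_ ᵥ* Smat t a' b' c') 3 = 0)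
  have : l = l' := by
    have := congrFun (m1.symm.trans m2) 0
    simp at this
    exact Units.ext (inj _ _ this)
  rw [this]

theorem bru_inl_row (t : ℕ) (p : Fˣ × F × F × F) (j : Fin 7) :
    (bru t (Sum.inl p) : Matrix (Fin 7) (Fin 7) F) 6 j
      = ((p.1 : F) ^ t)⁻¹ * (1 : Matrix (Fin 7) (Fin 7) F) 6 j := by
  obtain ⟨l, a, b, c⟩ := p
  have e : (Smat t a b c) * ((SG t a b c)⁻¹ : GL (Fin 7) F).val = 1 := by
    rw [← SG_val, ← Units.val_mul, mul_inv_cancel, Units.val_one]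
  have e' : ((SG t a b c)⁻¹ : GL (Fin 7) F).val 6 j = (1 : Matrix (Fin 7) (Fin 7) F) 6 j := by
    rw [← e, Matrix.mul_apply, Finset.sum_eq_single 6]
    · rw [S_row6]; simp
    · intro k _ hk
      rw [S_row6, Matrix.one_apply_ne (Ne.symm hk), zero_mul]
    · simp
  simp only [bru]
  rw [Units.val_mul, HG_val, hmat_eq, hm, Matrix.diagonal_mul, e']
  simp

theorem bru_inr_eq (t : ℕ) (p : Fˣ × F × F × F) (q : F × F × F) :
    bru t (Sum.inr (p, q)) * SG t q.1 q.2.1 q.2.2 = bru t (Sum.inl p) * UG := by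
  simp only [bru, inv_mul_cancel_right]

theorem bru_inr_row (t : ℕ) (p : Fˣ × F × F × F) (q : F × F × F) (j : Fin 7) :
    ((bru t (Sum.inr (p, q)) : Matrix (Fin 7) (Fin 7) F) 6 ᵥ* Smat t q.1 q.2.1 q.2.2) j
      = -((p.1 : F) ^ t)⁻¹ * (1 : Matrix (Fin 7) (Fin 7) F) 0 j := by
  rw [← Matrix.mul_apply_eq_vecMul, ← SG_val, ← Units.val_mul, bru_inr_eq, Units.val_mul,
    Matrix.mul_apply, Finset.sum_eq_single 6]
  · rw [bru_inl_row, UG_val]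
    fin_cases j <;> simp [ups]
    all_goals exact Matrix.one_apply_eq _
  · intro k _ hk
    rw [bru_inl_row, Matrix.one_apply_ne (Ne.symm hk), mul_zero, zero_mul]
  · simp

theorem bru_inr_ne (t : ℕ) (p : Fˣ × F × F × F) (q : F × F × F) :
    (bru t (Sum.inr (p, q)) : Matrix (Fin 7) (Fin 7) F) 6 0 ≠ 0 := by
  rw [← (S_coords t ((bru t (Sum.inr (p, q)) : Matrix (Fin 7) (Fin 7) F) 6) q.1 q.2.1 q.2.2).1, bru_inr_row]
  simp

theorem bru_inj {t : ℕ} (inj : ∀ x y : F, x ^ t = y ^ t → x = y) :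
    Function.Injective (bru (F := F) t) := by
  rintro (p | ⟨p, q⟩) (p' | ⟨p', q'⟩) h
  · rw [bru_inl_inj inj p p' h]
  · exfalso
    apply bru_inr_ne t p' q'
    rw [← h, bru_inl_row]
    simp
  · exfalso
    apply bru_inr_ne t p q
    rw [h, bru_inl_row]
    simp
  · have r := bru_inr_row t p q
    have r' := bru_inr_row t p' q'
    have n := bru_inr_ne t p q
    rw [← h] at r'
    obtain ⟨h1, h2, h3⟩ := S_unique inj _ n (by rw [r]; simp) (by rw [r]; simp) (by rw [r]; simp)
      (by rw [r']; simp) (by rw [r']; simp) (by rw [r']; simp)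
    have hq : q = q' := Prod.ext h1 (Prod.ext h2 h3)
    subst hq
    have e := bru_inr_eq t p q
    rw [h, bru_inr_eq] at e
    rw [bru_inl_inj inj p p' (mul_right_cancel e).symm]

theorem card_ree [Fintype F] {t : ℕ} {Φ : F →+* F} (hΦ : ∀ x, Φ x = (x ^ t) ^ 3)
    (hΦ' : ∀ x, Φ (x ^ t) = x) :
    Nat.card ↥(ReeGroup (F := F) t) =
      (Fintype.card F) ^ 3 * ((Fintype.card F) ^ 3 + 1) * (Fintype.card F - 1) := by
  classical
  have inj : ∀ x y : F, x ^ t = y ^ t → x = y := fun x y h => by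
    rw [← hΦ' x, h, hΦ']
  let f : (Fˣ × F × F × F) ⊕ ((Fˣ × F × F × F) × (F × F × F)) → ReeGroup (F := F) t :=
    fun p => ⟨bru t p, bru_mem t p⟩
  have hf : Function.Bijective f := by
    constructor
    · intro p q h
      exact bru_inj inj (congrArg Subtype.val h)
    · rintro ⟨g, hg⟩
      obtain ⟨p, hp⟩ := bru_surj hΦ hΦ' g (ree_good hΦ hΦ' g hg)
      exact ⟨p, Subtype.ext hp⟩
  rw [← Nat.card_eq_of_bijective f hf]
  rw [Nat.card_eq_fintype_card]
  simp only [Fintype.card_sum, Fintype.card_prod, Fintype.card_units]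
  ring

end final

end ReeAux

/-- The Ree group `Ree(q)` has order `q^3 (q^3 + 1)(q - 1)`, and `gcd(q^3 + 1, q - 1) = 2`. -/
theorem ree_order (m : ℕ) (hm : 0 < m) (F : Type*) [Field F] [Fintype F]
    (hF : Fintype.card F = 3 ^ (2 * m + 1)) :
    Nat.card ↥(ReeGroup (F := F) (3 ^ m)) =
      (3 ^ (2 * m + 1)) ^ 3 * ((3 ^ (2 * m + 1)) ^ 3 + 1) * (3 ^ (2 * m + 1) - 1) ∧
    Nat.gcd ((3 ^ (2 * m + 1)) ^ 3 + 1) (3 ^ (2 * m + 1) - 1) = 2 := by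
  constructor
  · haveI : Fact (Nat.Prime 3) := ⟨Nat.prime_three⟩
    haveI : CharP F 3 := charP_of_card_eq_prime_pow hF
    rw [ReeAux.card_ree (t := 3 ^ m) (Φ := iterateFrobenius F 3 (m + 1)), hF]
    · intro x
      rw [iterateFrobenius_def, ← pow_mul, pow_succ]
    · intro x
      rw [iterateFrobenius_def, ← pow_mul, ← pow_add]
      have := FiniteField.pow_card x
      rw [hF] at this
      rw [show m + (m + 1) = 2 * m + 1 by ring, this]
  · obtain ⟨k, hk⟩ : Odd (3 ^ (2 * m + 1)) := Odd.pow (by decide)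
    rw [hk]
    have e : (2 * k + 1) ^ 3 + 1 = 2 + (2 * k) * (4 * k ^ 2 + 6 * k + 3) := by ring
    rw [e, Nat.add_sub_cancel, Nat.gcd_add_mul_left_left]
    exact Nat.gcd_eq_left (Dvd.intro _ rfl)
end
end

section
/- U(q) is a Sylow 3-subgroup of Ree(q), and any two distinct Ree(q)-conjugates of U(q) intersect in the trivial subgroup. -/
open Matrix

set_option linter.unusedSectionVars false

noncomputable section

namespace ReePaper

variable {F : Type*} [Field F] [Fintype F]

/-- the invariant product -/
def cr {F : Type*} [Field F] (p q : Fin 7 → F) : Fin 7 → F :=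
  ![-(p 0 * q 3 - p 3 * q 0) + (p 1 * q 2 - p 2 * q 1),
    (p 0 * q 4 - p 4 * q 0) + (p 1 * q 3 - p 3 * q 1),
    -(p 0 * q 5 - p 5 * q 0) + (p 2 * q 3 - p 3 * q 2),
    -(p 0 * q 6 - p 6 * q 0) + (p 1 * q 5 - p 5 * q 1) + (p 2 * q 4 - p 4 * q 2),
    -(p 1 * q 6 - p 6 * q 1) + (p 3 * q 4 - p 4 * q 3),
    (p 2 * q 6 - p 6 * q 2) + (p 3 * q 5 - p 5 * q 3),
    -(p 3 * q 6 - p 6 * q 3) + (p 4 * q 5 - p 5 * q 4)]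

/-- the line coordinates -/
def lc {F : Type*} [Field F] (p q : Fin 7 → F) : Fin 7 → F :=
  ![p 0 * q 1 - p 1 * q 0,
    p 0 * q 2 - p 2 * q 0,
    -(p 1 * q 4 - p 4 * q 1),
    -(p 1 * q 5 - p 5 * q 1) + (p 2 * q 4 - p 4 * q 2),
    -(p 2 * q 5 - p 5 * q 2),
    p 4 * q 6 - p 6 * q 4,
    p 5 * q 6 - p 6 * q 5]

/-- the flag relation -/
def Rel {F : Type*} [Field F] (s : F →+* F) (p q : Fin 7 → F) : Prop :=
  cr p q = 0 ∧ lc p q = fun i => s (p i)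

/-- matrices preserving the structure -/
def Good {F : Type*} [Field F] (s : F →+* F) (g : Matrix (Fin 7) (Fin 7) F) : Prop :=
  (∀ p q, cr (p ᵥ* g) (q ᵥ* g) = cr p q ᵥ* g) ∧ ∀ p q, Rel s p q → Rel s (p ᵥ* g) (q ᵥ* g)

lemma Good.one {F : Type*} [Field F] (s : F →+* F) : Good s 1 := by
  simp [Good]

lemma Good.mul {F : Type*} [Field F] {s : F →+* F} {g h : Matrix (Fin 7) (Fin 7) F}
    (hg : Good s g) (hh : Good s h) : Good s (g * h) := by
  constructor
  · intro p q
    rw [← Matrix.vecMul_vecMul, ← Matrix.vecMul_vecMul, hh.1, hg.1, Matrix.vecMul_vecMul]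
  · intro p q h
    rw [← Matrix.vecMul_vecMul, ← Matrix.vecMul_vecMul]
    exact hh.2 _ _ (hg.2 _ _ h)

lemma amat_vecMul {F : Type*} [Field F] (t : ℕ) (x : F) (p : Fin 7 → F) :
    p ᵥ* amat t x = ![p 0, p 0 * x^t + p 1, p 1 * x + p 2, p 1 * (x^t * x) + p 2 * x^t + p 3,
      - p 0 * ((x^t)^3 * x) - p 1 * ((x^t)^2 * x) - p 2 * (x^t)^2 + p 3 * x^t + p 4,
      - p 0 * ((x^t)^3 * x^2) - p 4 * x + p 5,
      p 0 * ((x^t)^4 * x^2) - p 1 * ((x^t)^3 * x^2) + p 2 * ((x^t)^3 * x) + p 4 * (x^t * x)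
        - p 5 * x^t + p 6] := by
  ext i
  fin_cases i <;> simp [Matrix.vecMul, dotProduct, Fin.sum_univ_succ, amat] <;> ring

lemma bmat_vecMul {F : Type*} [Field F] (t : ℕ) (x : F) (p : Fin 7 → F) :
    p ᵥ* bmat t x = ![p 0, p 1, - p 0 * x^t + p 2, p 1 * x^t + p 3, - p 0 * x + p 4,
      - p 1 * (x^t)^2 + p 3 * x^t + p 5,
      - p 0 * (x^t * x) + p 2 * x + p 4 * x^t + p 6] := by
  ext i
  fin_cases i <;> simp [Matrix.vecMul, dotProduct, Fin.sum_univ_succ, bmat] <;> ring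

lemma cmat_vecMul {F : Type*} [Field F] (t : ℕ) (x : F) (p : Fin 7 → F) :
    p ᵥ* cmat t x = ![p 0, p 1, p 2, - p 0 * x^t + p 3, - p 1 * x^t + p 4,
      - p 0 * x + p 2 * x^t + p 5,
      - p 0 * (x^t)^2 + p 1 * x - p 3 * x^t + p 6] := by
  ext i
  fin_cases i <;> simp [Matrix.vecMul, dotProduct, Fin.sum_univ_succ, cmat] <;> ring

lemma ups_vecMul {F : Type*} [Field F] (p : Fin 7 → F) :
    p ᵥ* ups = ![- p 6, - p 5, - p 4, - p 3, - p 2, - p 1, - p 0] := by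
  ext i
  fin_cases i <;> simp [Matrix.vecMul, dotProduct, Fin.sum_univ_succ, ups]

/-- coordinates of the relation -/
lemma rel_iff {F : Type*} [Field F] (s : F →+* F) (p q : Fin 7 → F) : Rel s p q ↔
    ((-(p 0 * q 3 - p 3 * q 0) + (p 1 * q 2 - p 2 * q 1) = 0 ∧
    (p 0 * q 4 - p 4 * q 0) + (p 1 * q 3 - p 3 * q 1) = 0 ∧
    -(p 0 * q 5 - p 5 * q 0) + (p 2 * q 3 - p 3 * q 2) = 0 ∧
    -(p 0 * q 6 - p 6 * q 0) + (p 1 * q 5 - p 5 * q 1) + (p 2 * q 4 - p 4 * q 2) = 0 ∧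
    -(p 1 * q 6 - p 6 * q 1) + (p 3 * q 4 - p 4 * q 3) = 0 ∧
    (p 2 * q 6 - p 6 * q 2) + (p 3 * q 5 - p 5 * q 3) = 0 ∧
    -(p 3 * q 6 - p 6 * q 3) + (p 4 * q 5 - p 5 * q 4) = 0) ∧
    (p 0 * q 1 - p 1 * q 0 = s (p 0) ∧
    p 0 * q 2 - p 2 * q 0 = s (p 1) ∧
    -(p 1 * q 4 - p 4 * q 1) = s (p 2) ∧
    -(p 1 * q 5 - p 5 * q 1) + (p 2 * q 4 - p 4 * q 2) = s (p 3) ∧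
    -(p 2 * q 5 - p 5 * q 2) = s (p 4) ∧
    p 4 * q 6 - p 6 * q 4 = s (p 5) ∧
    p 5 * q 6 - p 6 * q 5 = s (p 6))) := by
  simp only [Rel, funext_iff, Fin.forall_fin_succ, cr, lc]
  simp

lemma good_of {F : Type*} [Field F] {s : F →+* F} {g : Matrix (Fin 7) (Fin 7) F}
    (h1 : ∀ p q, cr (p ᵥ* g) (q ᵥ* g) = cr p q ᵥ* g)
    (h2 : ∀ p q, Rel s p q → lc (p ᵥ* g) (q ᵥ* g) = fun i => s ((p ᵥ* g) i)) : Good s g := by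
  refine ⟨h1, fun p q h => ⟨?_, h2 p q h⟩⟩
  rw [h1, h.1, Matrix.zero_vecMul]

lemma ups_good {F : Type*} [Field F] (s : F →+* F) : Good s ups := by
  apply good_of
  · intro p q
    simp only [ups_vecMul]
    ext i
    fin_cases i <;> simp [cr] <;> ring
  · intro p q h
    rw [rel_iff] at h
    obtain ⟨⟨h0, h1, h2, h3', h4, h5, h6⟩, k0, k1, k2, k3, k4, k5, k6⟩ := h
    simp only [ups_vecMul]
    ext i
    fin_cases i <;> simp [lc, ← k0, ← k1, ← k2, ← k3, ← k4, ← k5, ← k6] <;> ring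

lemma hmat_good {F : Type*} [Field F] (s : F →+* F) (t : ℕ)
    (hs1 : ∀ x, s (x ^ t) = x) (hs2 : ∀ x, s x = (x ^ t) ^ 3) (l : Fˣ) : Good s (hmat t l) := by
  have key : ∀ p : Fin 7 → F, p ᵥ* hmat t l = ![p 0 * (l : F) ^ t, p 1 * (l / (l : F) ^ t),
      p 2 * (((l : F) ^ t) ^ 2 / l), p 3, p 4 * (l / ((l : F) ^ t) ^ 2), p 5 * ((l : F) ^ t / l),
      p 6 * ((l : F) ^ t)⁻¹] := by
    intro p
    have hl : (l : F) ≠ 0 := l.ne_zero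
    have hz : (l : F) ^ ((t : ℤ) * 2) = ((l : F) ^ t) ^ 2 := by
      rw [_root_.zpow_mul]
      norm_cast
    ext i
    fin_cases i <;> simp [hmat, Matrix.vecMul_diagonal, zpow_sub₀ hl, mul_comm (2 : ℤ), hz]
  have hl : (l : F) ≠ 0 := l.ne_zero
  have hA : (l : F) ^ t ≠ 0 := pow_ne_zero _ hl
  have e1 : s ((l : F) ^ t) = l := hs1 _
  have e2 : s (l : F) = ((l : F) ^ t) ^ 3 := hs2 _
  apply good_of
  · intro p q
    simp only [key]
    generalize (l : F) ^ t = A at hA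
    ext i
    fin_cases i <;> simp [cr] <;> field_simp <;> ring
  · intro p q h
    rw [rel_iff] at h
    obtain ⟨⟨h0, h1, h2, h3', h4, h5, h6⟩, k0, k1, k2, k3, k4, k5, k6⟩ := h
    simp only [key]
    generalize (l : F) ^ t = A at hA e1 e2
    ext i
    fin_cases i <;>
      simp [lc, e1, e2, ← k0, ← k1, ← k2, ← k3, ← k4, ← k5, ← k6] <;> field_simp <;> ring

lemma amat_good {F : Type*} [Field F] (h3 : (3 : F) = 0) (s : F →+* F) (t : ℕ)
    (hs1 : ∀ x, s (x ^ t) = x) (hs2 : ∀ x, s x = (x ^ t) ^ 3) (x : F) : Good s (amat t x) := by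
  apply good_of
  · intro p q
    simp only [amat_vecMul]
    generalize x ^ t = A
    ext i
    fin_cases i <;> simp [cr]
    · linear_combination 0 * h3
    · linear_combination (A * p 0 * q 3 - A * p 3 * q 0) * h3
    · linear_combination 0 * h3
    · linear_combination (A * p 0 * q 5 - A * p 5 * q 0 - x * A * p 0 * q 4 + x * A * p 4 * q
        0 + x^2 * A^3 * p 0 * q 1 - x^2 * A^3 * p 1 * q 0) * h3
    · linear_combination (A^2 * p 2 * q 3 - A^2 * p 3 * q 2 + x * A^2 * p 1 * q 3 - x * A^2 *
        p 3 * q 1 + x^2 * A^4 * p 0 * q 1 - x^2 * A^4 * p 1 * q 0) * h3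
    · linear_combination (x^2 * A^3 * p 1 * q 2 - x^2 * A^3 * p 2 * q 1) * h3
    · linear_combination (A * p 3 * q 5 - A * p 5 * q 3 - x * A * p 3 * q 4 + x * A * p 4 * q
        3 + x^2 * A^3 * p 0 * q 4 - x^2 * A^3 * p 4 * q 0 + x^2 * A^4 * p 0 * q 3 - x^2 * A^4 *
        p 1 * q 2 + x^2 * A^4 * p 2 * q 1 - x^2 * A^4 * p 3 * q 0) * h3
  · intro p q h
    rw [rel_iff] at h
    obtain ⟨⟨h0, h1, h2, h3', h4, h5, h6⟩, k0, k1, k2, k3, k4, k5, k6⟩ := h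
    simp only [amat_vecMul]
    have e1 : s (x ^ t) = x := hs1 x
    have e2 : s x = (x ^ t) ^ 3 := hs2 x
    generalize x ^ t = A at e1 e2
    ext i
    fin_cases i <;> simp [lc, e1, e2, map_pow]
    · linear_combination (1) * k0
    · linear_combination (x) * k0 + (1) * k1
    · linear_combination (A^2) * h0 + (- A) * h1 + (A^3) * k1 + (1) * k2
    · linear_combination (x * A) * h1 + (A) * h2 + (x * A^3) * k1 + (x) * k2 + (1) * k3 + (x
        * p 1 * q 4 - x * p 4 * q 1) * h3
    · linear_combination (- x^3 * A^3) * k0 + (- x^2 * A^3) * k1 + (- x^2) * k2 + (x) * k3 +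
        (1) * k4
    · linear_combination (x^2 * A^5) * h0 + (x^2 * A^4) * h1 + (- x * A^4) * h2 + (x * A^3) *
        h3' + (x * A^2) * h4 + (- A^2) * h5 + (- A) * h6 + (- x^3 * A^6) * k0 + (- A^3) * k4 +
        (1) * k5 + (- x * A^3 * p 2 * q 4 + x * A^3 * p 4 * q 2 - x^2 * A^4 * p 0 * q 4 + x^2 *
        A^4 * p 4 * q 0 - x^2 * A^5 * p 1 * q 2 + x^2 * A^5 * p 2 * q 1 + x^3 * A^6 * p 0 * q 1
        - x^3 * A^6 * p 1 * q 0) * h3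
    · linear_combination (x^2 * A^3) * h3' + (x^4 * A^6) * k0 + (- x^3 * A^6) * k1 + (x^3 *
        A^3) * k2 + (x * A^3) * k4 + (- x) * k5 + (1) * k6

lemma bmat_good {F : Type*} [Field F] (h3 : (3 : F) = 0) (s : F →+* F) (t : ℕ)
    (hs1 : ∀ x, s (x ^ t) = x) (hs2 : ∀ x, s x = (x ^ t) ^ 3) (x : F) : Good s (bmat t x) := by
  apply good_of
  · intro p q
    simp only [bmat_vecMul]
    generalize x ^ t = A
    ext i
    fin_cases i <;> simp [cr]
    · linear_combination 0 * h3
    · linear_combination 0 * h3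
    · linear_combination (- A * p 0 * q 3 + A * p 3 * q 0) * h3
    · linear_combination (- A * p 0 * q 4 + A * p 4 * q 0) * h3
    · linear_combination 0 * h3
    · linear_combination (A^2 * p 1 * q 3 - A^2 * p 3 * q 1) * h3
    · linear_combination (- A * p 3 * q 4 + A * p 4 * q 3 - x * A * p 0 * q 3 + x * A * p 3 *
        q 0) * h3
  · intro p q h
    rw [rel_iff] at h
    obtain ⟨⟨h0, h1, h2, h3', h4, h5, h6⟩, k0, k1, k2, k3, k4, k5, k6⟩ := h
    simp only [bmat_vecMul]
    have e1 : s (x ^ t) = x := hs1 x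
    have e2 : s x = (x ^ t) ^ 3 := hs2 x
    generalize x ^ t = A at e1 e2
    ext i
    fin_cases i <;> simp [lc, e1, e2, map_pow]
    · linear_combination (1) * k0
    · linear_combination (1) * k1
    · linear_combination (- x) * k0 + (1) * k2
    · linear_combination (- A) * h1 + (x) * k1 + (1) * k3
    · linear_combination (- A^2) * h0 + (- A) * h2 + (- A^3) * k0 + (1) * k4
    · linear_combination (x) * h3' + (- x^2) * k1 + (x) * k3 + (1) * k5 + (- x * p 2 * q 4 +
        x * p 4 * q 2) * h3
    · linear_combination (- x * A^2) * h0 + (- x * A) * h2 + (A^2) * h4 + (- A) * h6 + (- x *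
        A^3) * k0 + (A^3) * k2 + (x) * k4 + (1) * k6

lemma cmat_good {F : Type*} [Field F] (h3 : (3 : F) = 0) (s : F →+* F) (t : ℕ)
    (hs1 : ∀ x, s (x ^ t) = x) (hs2 : ∀ x, s x = (x ^ t) ^ 3) (x : F) : Good s (cmat t x) := by
  apply good_of
  · intro p q
    simp only [cmat_vecMul]
    generalize x ^ t = A
    ext i
    fin_cases i <;> simp [cr]
    · linear_combination 0 * h3
    · linear_combination 0 * h3
    · linear_combination 0 * h3
    · linear_combination (A * p 1 * q 2 - A * p 2 * q 1) * h3
    · linear_combination (A * p 1 * q 3 - A * p 3 * q 1) * h3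
    · linear_combination (- A * p 2 * q 3 + A * p 3 * q 2) * h3
    · linear_combination (- A^2 * p 0 * q 3 + A^2 * p 3 * q 0) * h3
  · intro p q h
    rw [rel_iff] at h
    obtain ⟨⟨h0, h1, h2, h3', h4, h5, h6⟩, k0, k1, k2, k3, k4, k5, k6⟩ := h
    simp only [cmat_vecMul]
    have e1 : s (x ^ t) = x := hs1 x
    have e2 : s x = (x ^ t) ^ 3 := hs2 x
    generalize x ^ t = A at e1 e2
    ext i
    fin_cases i <;> simp [lc, e1, e2, map_pow]
    · linear_combination (1) * k0
    · linear_combination (1) * k1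
    · linear_combination (1) * k2
    · linear_combination (- x) * k0 + (1) * k3
    · linear_combination (- x) * k1 + (1) * k4
    · linear_combination (A^2) * h1 + (A) * h4 + (- A^3) * k0 + (x) * k2 + (1) * k5
    · linear_combination (- x * A) * h0 + (- A^2) * h2 + (x) * h3' + (A) * h5 + (- x^2) * k0
        + (A^3) * k1 + (- x) * k3 + (1) * k6 + (- x * p 1 * q 5 + x * p 5 * q 1) * h3

/-- unitriangular matrices -/
def Unitri {F : Type*} [Field F] (g : Matrix (Fin 7) (Fin 7) F) : Prop :=
  (∀ i j, j < i → g i j = 0) ∧ ∀ i, g i i = 1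

lemma upper_mul {F : Type*} [Field F] {g h : Matrix (Fin 7) (Fin 7) F}
    (hg : ∀ i j, j < i → g i j = 0) (hh : ∀ i j, j < i → h i j = 0) :
    (∀ i j, j < i → (g * h) i j = 0) ∧ ∀ i, (g * h) i i = g i i * h i i := by
  constructor
  · intro i j hij
    rw [Matrix.mul_apply]
    refine Finset.sum_eq_zero fun k _ => ?_
    rcases lt_or_ge k i with hk | hk
    · rw [hg i k hk, zero_mul]
    · rw [hh k j (lt_of_lt_of_le hij hk), mul_zero]
  · intro i
    rw [Matrix.mul_apply]
    refine Finset.sum_eq_single i (fun k _ hk => ?_) (by simp)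
    rcases lt_or_gt_of_ne hk with hk | hk
    · rw [hg i k hk, zero_mul]
    · rw [hh k i hk, mul_zero]

lemma upper_pow {F : Type*} [Field F] {g : Matrix (Fin 7) (Fin 7) F}
    (hg : ∀ i j, j < i → g i j = 0) (n : ℕ) :
    (∀ i j, j < i → (g ^ n) i j = 0) ∧ ∀ i, (g ^ n) i i = g i i ^ n := by
  induction n with
  | zero =>
    refine ⟨fun i j h => ?_, fun i => by simp⟩
    rw [pow_zero, Matrix.one_apply_ne h.ne']
  | succ n ih =>
    rw [pow_succ]
    have := upper_mul ih.1 hg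
    refine ⟨this.1, fun i => ?_⟩
    rw [this.2, ih.2, pow_succ]

lemma Unitri.mul {F : Type*} [Field F] {g h : Matrix (Fin 7) (Fin 7) F}
    (hg : Unitri g) (hh : Unitri h) : Unitri (g * h) := by
  have := upper_mul hg.1 hh.1
  exact ⟨this.1, fun i => by rw [this.2, hg.2, hh.2, one_mul]⟩

lemma Unitri.one {F : Type*} [Field F] : Unitri (1 : Matrix (Fin 7) (Fin 7) F) :=
  ⟨fun i j h => Matrix.one_apply_ne h.ne', fun i => by simp⟩

lemma Unitri.det {F : Type*} [Field F] {g : Matrix (Fin 7) (Fin 7) F} (hg : Unitri g) :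
    g.det = 1 := by
  rw [Matrix.det_of_isUpperTriangular (fun i j h => hg.1 i j h)]
  simp [hg.2]

lemma Unitri.pow_nine {F : Type*} [Field F] [CharP F 3] {g : Matrix (Fin 7) (Fin 7) F}
    (hg : Unitri g) : g ^ (3 ^ 2) = 1 := by
  have h1 : g.charpoly = (Polynomial.X - 1) ^ 7 := by
    rw [Matrix.charpoly_of_isUpperTriangular _ (fun i j h => hg.1 i j h)]
    simp [hg.2]
  have h2 := Matrix.aeval_self_charpoly g
  rw [h1] at h2
  simp only [map_pow, map_sub, Polynomial.aeval_X, map_one] at h2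
  have h4 : (g - 1) ^ (3 ^ 2) = 0 := by
    rw [show 3 ^ 2 = 7 + 2 from rfl, pow_add, h2, zero_mul]
  have : Fact (Nat.Prime 3) := ⟨by norm_num⟩
  rw [sub_pow_char_pow_of_commute _ _ (Commute.one_right g), one_pow, sub_eq_zero] at h4
  exact h4

lemma amat_unitri {F : Type*} [Field F] (t : ℕ) (x : F) : Unitri (amat t x) := by
  constructor
  · intro i j h
    fin_cases i <;> fin_cases j <;> first | (exact absurd h (by decide)) | simp [amat]
  · intro i
    fin_cases i <;> simp [amat]

lemma bmat_unitri {F : Type*} [Field F] (t : ℕ) (x : F) : Unitri (bmat t x) := by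
  constructor
  · intro i j h
    fin_cases i <;> fin_cases j <;> first | (exact absurd h (by decide)) | simp [bmat]
  · intro i
    fin_cases i <;> simp [bmat]

lemma cmat_unitri {F : Type*} [Field F] (t : ℕ) (x : F) : Unitri (cmat t x) := by
  constructor
  · intro i j h
    fin_cases i <;> fin_cases j <;> first | (exact absurd h (by decide)) | simp [cmat]
  · intro i
    fin_cases i <;> simp [cmat]

/-- induction on a closure in a finite group, monoid style -/
lemma closure_ind {G : Type*} [Group G] [Finite G] {S : Set G} {P : G → Prop}
    (h0 : ∀ g ∈ S, P g) (h1 : P 1) (hm : ∀ a b, P a → P b → P (a * b)) {g : G}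
    (hg : g ∈ Subgroup.closure S) : P g := by
  induction hg using Subgroup.closure_induction with
  | mem x hx => exact h0 x hx
  | one => exact h1
  | mul x y _ _ hx hy => exact hm x y hx hy
  | inv x _ hx =>
    have hp : ∀ n : ℕ, P (x ^ n) := by
      intro n
      induction n with
      | zero => simpa using h1
      | succ n ih => rw [pow_succ]; exact hm _ _ ih hx
    have h : x⁻¹ = x ^ (orderOf x - 1) := by
      rw [inv_eq_iff_mul_eq_one, ← pow_succ', Nat.sub_add_cancel (orderOf_pos x), pow_orderOf_eq_one]
    rw [h]
    exact hp _

lemma usub_unitri {F : Type*} [Field F] [Fintype F] {t : ℕ} {g : GL (Fin 7) F} (hg : g ∈ Usub t) :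
    Unitri (g : Matrix (Fin 7) (Fin 7) F) := by
  refine closure_ind (P := fun g : GL (Fin 7) F => Unitri (g : Matrix (Fin 7) (Fin 7) F))
    ?_ ?_ ?_ hg
  · rintro g (⟨x, h⟩ | ⟨x, h⟩ | ⟨x, h⟩)
    · rw [h]; exact amat_unitri t x
    · rw [h]; exact bmat_unitri t x
    · rw [h]; exact cmat_unitri t x
  · simpa using Unitri.one
  · intro a b ha hb
    rw [Units.val_mul]
    exact ha.mul hb

lemma ree_good {F : Type*} [Field F] [Fintype F] {t : ℕ} (h3 : (3 : F) = 0) (s : F →+* F)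
    (hs1 : ∀ x, s (x ^ t) = x) (hs2 : ∀ x, s x = (x ^ t) ^ 3) {g : GL (Fin 7) F}
    (hg : g ∈ ReeGroup t) : Good s (g : Matrix (Fin 7) (Fin 7) F) := by
  refine closure_ind (P := fun g : GL (Fin 7) F => Good s (g : Matrix (Fin 7) (Fin 7) F))
    ?_ ?_ ?_ hg
  · rintro g (⟨x, h⟩ | ⟨x, h⟩ | ⟨x, h⟩ | ⟨x, h⟩ | h)
    · rw [h]; exact amat_good h3 s t hs1 hs2 x
    · rw [h]; exact bmat_good h3 s t hs1 hs2 x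
    · rw [h]; exact cmat_good h3 s t hs1 hs2 x
    · rw [h]; exact hmat_good s t hs1 hs2 x
    · rw [h]; exact ups_good s
  · simpa using Good.one s
  · intro a b ha hb
    rw [Units.val_mul]
    exact ha.mul hb

lemma usub_le {F : Type*} [Field F] [Fintype F] (t : ℕ) : Usub (F := F) t ≤ ReeGroup t := by
  apply Subgroup.closure_mono
  rintro g (h | h | h)
  · exact Or.inl h
  · exact Or.inr (Or.inl h)
  · exact Or.inr (Or.inr (Or.inl h))

lemma exists_unit {F : Type*} [Field F] {M : Matrix (Fin 7) (Fin 7) F} (h : Unitri M) :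
    ∃ g : GL (Fin 7) F, (g : Matrix (Fin 7) (Fin 7) F) = M :=
  ⟨Matrix.GeneralLinearGroup.mkOfDetNeZero M (by rw [h.det]; exact one_ne_zero), rfl⟩

lemma exists_a {F : Type*} [Field F] [Fintype F] (t : ℕ) (x : F) :
    ∃ g ∈ Usub (F := F) t, (g : Matrix (Fin 7) (Fin 7) F) = amat t x := by
  obtain ⟨g, hg⟩ := exists_unit (amat_unitri t x)
  exact ⟨g, Subgroup.subset_closure (Or.inl ⟨x, hg⟩), hg⟩

lemma exists_b {F : Type*} [Field F] [Fintype F] (t : ℕ) (x : F) :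
    ∃ g ∈ Usub (F := F) t, (g : Matrix (Fin 7) (Fin 7) F) = bmat t x := by
  obtain ⟨g, hg⟩ := exists_unit (bmat_unitri t x)
  exact ⟨g, Subgroup.subset_closure (Or.inr (Or.inl ⟨x, hg⟩)), hg⟩

lemma exists_c {F : Type*} [Field F] [Fintype F] (t : ℕ) (x : F) :
    ∃ g ∈ Usub (F := F) t, (g : Matrix (Fin 7) (Fin 7) F) = cmat t x := by
  obtain ⟨g, hg⟩ := exists_unit (cmat_unitri t x)
  exact ⟨g, Subgroup.subset_closure (Or.inr (Or.inr ⟨x, hg⟩)), hg⟩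

set_option maxHeartbeats 1600000 in
/-- points of the ovoid with vanishing first coordinate are multiples of the last basis vector -/
lemma rel_first_zero {F : Type*} [Field F] (s : F →+* F) {p q : Fin 7 → F} (h : Rel s p q)
    (z0 : p 0 = 0) : p 1 = 0 ∧ p 2 = 0 ∧ p 3 = 0 ∧ p 4 = 0 ∧ p 5 = 0 := by
  rw [rel_iff] at h
  obtain ⟨⟨h0, h1, h2, h3', h4, h5, h6⟩, k0, k1, k2, k3, k4, k5, k6⟩ := h
  have hs : ∀ a, 0 = s a → a = 0 := fun a ha => (map_eq_zero s).1 ha.symm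
  by_cases c0 : q 0 = 0
  · have p1 : p 1 = 0 := hs _ (by rw [← k1]; simp [*])
    by_cases c1 : q 1 = 0
    · have p2 : p 2 = 0 := hs _ (by rw [← k2]; simp [*])
      by_cases c2 : q 2 = 0
      · have p3 : p 3 = 0 := hs _ (by rw [← k3]; simp [*])
        have p4 : p 4 = 0 := hs _ (by rw [← k4]; simp [*])
        refine ⟨p1, p2, p3, p4, ?_⟩
        by_contra p5
        have q3 : q 3 = 0 := by simpa [p2, c2, p3, p5] using h5
        have q4 : q 4 = 0 := by simpa [p3, q3, p4, p5] using h6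
        have k5' : 0 = s (p 5) := by rw [← k5, p4, q4]; ring
        exact p5 (hs _ k5')
      · have p3 : p 3 = 0 := by simpa [*] using h2
        have p4 : p 4 = 0 := by simpa [*] using k3
        have p5 : p 5 = 0 := by simpa [*] using k4
        exact ⟨p1, p2, p3, p4, p5⟩
    · have p2 : p 2 = 0 := by simpa [*] using h0
      have p3 : p 3 = 0 := by simpa [*] using h1
      have p4 : p 4 = 0 := by simpa [*] using k2
      have p5 : p 5 = 0 := by simpa [*] using k3
      exact ⟨p1, p2, p3, p4, p5⟩
  · have p1 : p 1 = 0 := by simpa [*] using k0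
    have p2 : p 2 = 0 := by simpa [*] using k1
    have p3 : p 3 = 0 := by simpa [*] using h0
    have p4 : p 4 = 0 := by simpa [*] using h1
    have p5 : p 5 = 0 := by simpa [*] using h2
    exact ⟨p1, p2, p3, p4, p5⟩

set_option maxHeartbeats 1600000 in
lemma rel_first {F : Type*} [Field F] (s : F →+* F) {p q : Fin 7 → F} (h : Rel s p q)
    (hp : p 0 ≠ 0) (p1 : p 1 = 0) (p2 : p 2 = 0) (p3 : p 3 = 0) :
    p 4 = 0 ∧ p 5 = 0 ∧ p 6 = 0 := by
  rw [rel_iff] at h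
  obtain ⟨⟨h0, h1, h2, h3', h4, h5, h6⟩, k0, k1, k2, k3, k4, k5, k6⟩ := h
  have hsp : s (p 0) ≠ 0 := (map_ne_zero s).2 hp
  have q1 : q 1 ≠ 0 := by
    intro h
    apply hsp
    rw [← k0]; simp [*]
  have q2 : q 2 = 0 := by simpa [*] using k1
  have q3 : q 3 = 0 := by simpa [*] using h0
  have p4 : p 4 = 0 := by simpa [*] using k2
  have q4 : q 4 = 0 := by simpa [*] using h1
  have p5 : p 5 = 0 := by simpa [*] using k3
  have q5 : q 5 = 0 := by simpa [*] using h2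
  have p6 : p 6 = 0 := ((map_eq_zero s).1 (by rw [← k6]; simp [*]))
  exact ⟨p4, p5, p6⟩

lemma exists_move {F : Type*} [Field F] [Fintype F] {t : ℕ} (h3 : (3 : F) = 0) (s : F →+* F)
    (hs1 : ∀ x, s (x ^ t) = x) (hs2 : ∀ x, s x = (x ^ t) ^ 3) (hsurj : ∀ y : F, ∃ x, x ^ t = y)
    {p q : Fin 7 → F} (h : Rel s p q) (hp : p 0 ≠ 0) :
    ∃ u ∈ Usub (F := F) t, p ᵥ* (u : Matrix (Fin 7) (Fin 7) F) = Pi.single 0 (p 0) := by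
  obtain ⟨x, hx⟩ := hsurj (- p 1 / p 0)
  obtain ⟨a, haU, ha⟩ := exists_a t x
  have A0 : (p ᵥ* amat t x) 0 = p 0 := by simp [amat_vecMul]
  have A1 : (p ᵥ* amat t x) 1 = 0 := by
    simp [amat_vecMul, hx]; field_simp; ring
  generalize hp' : p ᵥ* amat t x = p' at A0 A1
  obtain ⟨y, hy⟩ := hsurj (p' 2 / p 0)
  obtain ⟨b, hbU, hb⟩ := exists_b t y
  have B0 : (p' ᵥ* bmat t y) 0 = p 0 := by simp [bmat_vecMul, A0]
  have B1 : (p' ᵥ* bmat t y) 1 = 0 := by simp [bmat_vecMul, A1]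
  have B2 : (p' ᵥ* bmat t y) 2 = 0 := by
    simp [bmat_vecMul, hy, A0]; field_simp; ring
  generalize hp'' : p' ᵥ* bmat t y = p'' at B0 B1 B2
  obtain ⟨z, hz⟩ := hsurj (p'' 3 / p 0)
  obtain ⟨c, hcU, hc⟩ := exists_c t z
  have C0 : (p'' ᵥ* cmat t z) 0 = p 0 := by simp [cmat_vecMul, B0]
  have C1 : (p'' ᵥ* cmat t z) 1 = 0 := by simp [cmat_vecMul, B1]
  have C2 : (p'' ᵥ* cmat t z) 2 = 0 := by simp [cmat_vecMul, B2]
  have C3 : (p'' ᵥ* cmat t z) 3 = 0 := by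
    simp [cmat_vecMul, hz, B0]; field_simp; ring
  have hu : a * b * c ∈ Usub t := mul_mem (mul_mem haU hbU) hcU
  have he : p ᵥ* ((a * b * c : GL (Fin 7) F) : Matrix (Fin 7) (Fin 7) F) = p'' ᵥ* cmat t z := by
    rw [Units.val_mul, Units.val_mul, ← Matrix.vecMul_vecMul, ← Matrix.vecMul_vecMul, ha, hb, hc,
      hp', hp'']
  have hg := (ree_good h3 s hs1 hs2 (usub_le t hu)).2 _ _ h
  rw [he] at hg
  obtain ⟨C4, C5, C6⟩ := rel_first s hg (by rw [C0]; exact hp) C1 C2 C3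
  refine ⟨_, hu, ?_⟩
  rw [he]
  ext i
  fin_cases i
  · simpa using C0
  · simpa using C1
  · simpa using C2
  · simpa using C3
  · simpa using C4
  · simpa using C5
  · simpa using C6

lemma ne_zero_row {F : Type*} [Field F] (g : GL (Fin 7) F) (i : Fin 7) :
    (g : Matrix (Fin 7) (Fin 7) F) i ≠ 0 := by
  intro h
  have h1 : (g : Matrix (Fin 7) (Fin 7) F) * (g⁻¹ : GL (Fin 7) F).1 = 1 := by
    rw [← Units.val_mul, mul_inv_cancel, Units.val_one]
  have h2 := congrFun (congrFun h1 i) i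
  rw [Matrix.mul_apply, Matrix.one_apply_eq] at h2
  simp [h] at h2

lemma rel_e0 {F : Type*} [Field F] (s : F →+* F) :
    Rel s (Pi.single 0 1 : Fin 7 → F) (Pi.single 1 1) := by
  rw [rel_iff]; simp

lemma rel_e6 {F : Type*} [Field F] (s : F →+* F) :
    Rel s (Pi.single 6 1 : Fin 7 → F) (-Pi.single 5 1) := by
  rw [rel_iff]; simp

set_option maxHeartbeats 1600000 in
/-- an element fixing the two base points is diagonal -/
lemma diag_of_fix {F : Type*} [Field F] (s : F →+* F) (g : GL (Fin 7) F)
    (hg : Good s (g : Matrix (Fin 7) (Fin 7) F)) (c d : F)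
    (h0 : (g : Matrix (Fin 7) (Fin 7) F) 0 = Pi.single 0 c)
    (h6 : (g : Matrix (Fin 7) (Fin 7) F) 6 = Pi.single 6 d) :
    ∀ i j, i ≠ j → (g : Matrix (Fin 7) (Fin 7) F) i j = 0 := by
  have hc : c ≠ 0 := by
    rintro rfl
    exact ne_zero_row g 0 (by simpa using h0)
  have hd : d ≠ 0 := by
    rintro rfl
    exact ne_zero_row g 6 (by simpa using h6)
  generalize (g : Matrix (Fin 7) (Fin 7) F) = M at *
  have r1 := hg.2 _ _ (rel_e0 s)
  have r2 := hg.2 _ _ (rel_e6 s)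
  rw [Matrix.neg_vecMul] at r2
  simp only [Matrix.single_one_vecMul, Matrix.row_def, h0, h6] at r1 r2
  rw [rel_iff] at r1 r2
  have hcr : ∀ i j, cr (M i) (M j) = cr (Pi.single i 1) (Pi.single j 1) ᵥ* M := by
    intro i j
    rw [← hg.1, Matrix.single_one_vecMul, Matrix.single_one_vecMul]
    rfl
  have e3 : M 3 = -cr (M 0) (M 6) := by
    rw [hcr]
    ext i
    simp [cr, Matrix.vecMul, dotProduct, Fin.sum_univ_succ]
  have e2 : M 2 = -cr (M 0) (M 5) := by
    rw [hcr]
    ext i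
    simp [cr, Matrix.vecMul, dotProduct, Fin.sum_univ_succ]
  have e4 : M 4 = -cr (M 1) (M 6) := by
    rw [hcr]
    ext i
    simp [cr, Matrix.vecMul, dotProduct, Fin.sum_univ_succ]
  have f2 : cr (M 0) (M 2) = 0 := by
    rw [hcr]
    ext i
    simp [cr, Matrix.vecMul, dotProduct, Fin.sum_univ_succ]
  have f4 : cr (M 6) (M 4) = 0 := by
    rw [hcr]
    ext i
    simp [cr, Matrix.vecMul, dotProduct, Fin.sum_univ_succ]
  simp [hc, hd] at r1 r2
  obtain ⟨⟨m13, m14, m15, m16⟩, -, m12⟩ := r1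
  obtain ⟨⟨m50, m51, m52, m53⟩, m54, -⟩ := r2
  have z0 : ∀ j, j ≠ 0 → M 0 j = 0 := fun j hj => by rw [h0, Pi.single_eq_of_ne hj]
  have z6 : ∀ j, j ≠ 6 → M 6 j = 0 := fun j hj => by rw [h6, Pi.single_eq_of_ne hj]
  have n0 : M 0 0 ≠ 0 := by rw [h0]; simpa using hc
  have n6 : M 6 6 ≠ 0 := by rw [h6]; simpa using hd
  have a1 := z0 1 (by decide)
  have a2 := z0 2 (by decide)
  have a3 := z0 3 (by decide)
  have a4 := z0 4 (by decide)
  have a5 := z0 5 (by decide)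
  have a6 := z0 6 (by decide)
  have b0 := z6 0 (by decide)
  have b1 := z6 1 (by decide)
  have b2 := z6 2 (by decide)
  have b3 := z6 3 (by decide)
  have b4 := z6 4 (by decide)
  have b5 := z6 5 (by decide)
  simp only [cr, funext_iff, Fin.forall_fin_succ] at e3 e2 e4 f2 f4
  simp [a1, a2, a3, a4, a5, a6, b0, b1, b2, b3, b4, b5] at e3
  simp [a1, a2, a3, a4, a5, a6, m50, m51, m52, m53, m54] at e2
  simp [b0, b1, b2, b3, b4, b5, m12, m13, m14, m15, m16] at e4
  simp [a1, a2, a3, a4, a5, a6, n0] at f2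
  simp [b0, b1, b2, b3, b4, b5, n6] at f4
  have m56 : M 5 6 = 0 := by
    have := e2.2.2.2.1
    rw [f2.1] at this
    exact (mul_eq_zero.1 this.symm).resolve_left n0
  have m10 : M 1 0 = 0 := by
    have := e4.2.2.2.1
    rw [f4.2.2.2] at this
    exact (mul_eq_zero.1 this.symm).resolve_right n6
  intro i j hij
  fin_cases i <;> fin_cases j <;> first | exact absurd rfl hij | simp [*]

lemma key {F : Type*} [Field F] [Fintype F] {t : ℕ} (h3 : (3 : F) = 0) (s : F →+* F)
    (hs1 : ∀ x, s (x ^ t) = x) (hs2 : ∀ x, s x = (x ^ t) ^ 3) (hsurj : ∀ y : F, ∃ x, x ^ t = y)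
    {g : GL (Fin 7) F} (hg : g ∈ ReeGroup t) (d : F)
    (h6 : (g : Matrix (Fin 7) (Fin 7) F) 6 = Pi.single 6 d) :
    ∃ u ∈ Usub (F := F) t, ∀ i j, i ≠ j → ((g * u : GL (Fin 7) F) :
      Matrix (Fin 7) (Fin 7) F) i j = 0 := by
  have hgood := ree_good h3 s hs1 hs2 hg
  have hr := hgood.2 _ _ (rel_e0 s)
  simp only [Matrix.single_one_vecMul, Matrix.row_def] at hr
  have hne : (g : Matrix (Fin 7) (Fin 7) F) 0 0 ≠ 0 := by
    intro h
    obtain ⟨p1, p2, p3, p4, p5⟩ := rel_first_zero s hr h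
    have hd : d ≠ 0 := by
      rintro rfl
      exact ne_zero_row g 6 (by simpa using h6)
    have hrow : (g : Matrix (Fin 7) (Fin 7) F) 0
        = (g.1 0 6 / d) • (g : Matrix (Fin 7) (Fin 7) F) 6 := by
      rw [h6]
      ext i
      fin_cases i <;> simp [h, p1, p2, p3, p4, p5, hd]
    have h1 : (g : Matrix (Fin 7) (Fin 7) F) * (g⁻¹ : GL (Fin 7) F).1 = 1 := by
      rw [← Units.val_mul, mul_inv_cancel, Units.val_one]
    have e0 := congrFun (congrFun h1 0) 0
    have e6 := congrFun (congrFun h1 6) 0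
    rw [Matrix.mul_apply, Matrix.one_apply_eq] at e0
    rw [Matrix.mul_apply, Matrix.one_apply_ne (by decide)] at e6
    rw [hrow] at e0
    simp only [Pi.smul_apply, smul_eq_mul, mul_assoc, ← Finset.mul_sum] at e0
    rw [e6, mul_zero] at e0
    exact zero_ne_one e0
  obtain ⟨u, hu, hmove⟩ := exists_move h3 s hs1 hs2 hsurj hr hne
  refine ⟨u, hu, ?_⟩
  have hU := usub_unitri hu
  refine diag_of_fix s (g * u) (ree_good h3 s hs1 hs2 (mul_mem hg (usub_le t hu))) (g.1 0 0) d ?_ ?_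
  · rw [Units.val_mul, ← hmove]; rfl
  · have : ((g * u : GL (Fin 7) F) : Matrix (Fin 7) (Fin 7) F) 6 = g.1 6 ᵥ* u.1 := by
      rw [Units.val_mul]; rfl
    rw [this, h6, Matrix.single_vecMul]
    ext i
    by_cases hi : i = 6
    · subst hi
      simp [hU.2]
    · have : i < 6 := by
        revert hi; revert i; decide
      simp [hU.1 6 i this, hi]

lemma unitri_mem {F : Type*} [Field F] [Fintype F] {t : ℕ} (h3 : (3 : F) = 0) (s : F →+* F)
    (hs1 : ∀ x, s (x ^ t) = x) (hs2 : ∀ x, s x = (x ^ t) ^ 3) (hsurj : ∀ y : F, ∃ x, x ^ t = y)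
    {g : GL (Fin 7) F} (hg : g ∈ ReeGroup t) (hu : Unitri (g : Matrix (Fin 7) (Fin 7) F)) :
    g ∈ Usub t := by
  obtain ⟨u, huU, hd⟩ := key h3 s hs1 hs2 hsurj hg 1 (by
    ext i
    by_cases hi : i = 6
    · subst hi
      simp [hu.2]
    · have : i < 6 := by
        revert hi; revert i; decide
      simp [hu.1 6 i this, hi])
  have hU : Unitri ((g * u : GL (Fin 7) F) : Matrix (Fin 7) (Fin 7) F) := by
    rw [Units.val_mul]
    exact hu.mul (usub_unitri huU)
  have : g * u = 1 := by
    ext i j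
    by_cases hij : i = j
    · subst hij
      rw [hU.2]; simp
    · rw [hd i j hij, Units.val_one, Matrix.one_apply_ne hij]
  rw [eq_inv_of_mul_eq_one_left this]
  exact inv_mem huU

/-- elements fixing the base point normalise the unipotent subgroup -/
lemma conj_mem {F : Type*} [Field F] [Fintype F] {t : ℕ} (h3 : (3 : F) = 0) (s : F →+* F)
    (hs1 : ∀ x, s (x ^ t) = x) (hs2 : ∀ x, s x = (x ^ t) ^ 3) (hsurj : ∀ y : F, ∃ x, x ^ t = y)
    {g : GL (Fin 7) F} (hg : g ∈ ReeGroup t) (d : F)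
    (h6 : (g : Matrix (Fin 7) (Fin 7) F) 6 = Pi.single 6 d) {v : GL (Fin 7) F}
    (hv : v ∈ Usub t) : g * v * g⁻¹ ∈ Usub t := by
  obtain ⟨u, huU, hd⟩ := key h3 s hs1 hs2 hsurj hg d h6
  apply unitri_mem h3 s hs1 hs2 hsurj
  · exact mul_mem (mul_mem hg (usub_le t hv)) (inv_mem hg)
  have hw : Unitri ((u⁻¹ * v * u : GL (Fin 7) F) : Matrix (Fin 7) (Fin 7) F) :=
    usub_unitri (mul_mem (mul_mem (inv_mem huU) hv) huU)
  generalize hw' : u⁻¹ * v * u = w at hw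
  generalize hk : g * u = k at hd
  have hE : g * v * g⁻¹ = k * w * k⁻¹ := by rw [← hw', ← hk]; group
  rw [hE]
  generalize hM : ((k * w * k⁻¹ : GL (Fin 7) F) : Matrix (Fin 7) (Fin 7) F) = M
  have hMk : M * k.1 = k.1 * w.1 := by
    rw [← hM, ← Units.val_mul, ← Units.val_mul, inv_mul_cancel_right]
  have hent : ∀ i j, M i j * k.1 j j = k.1 i i * w.1 i j := by
    intro i j
    have := congrFun (congrFun hMk i) j
    rw [Matrix.mul_apply, Matrix.mul_apply, Finset.sum_eq_single j, Finset.sum_eq_single i] at this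
    · exact this
    · intro l _ hl
      rw [hd i l hl.symm, zero_mul]
    · simp
    · intro l _ hl
      rw [hd l j hl, mul_zero]
    · simp
  have hkne : ∀ i, k.1 i i ≠ 0 := by
    intro i h
    apply ne_zero_row k i
    ext j
    by_cases hij : i = j
    · subst hij; exact h
    · exact hd i j hij
  constructor
  · intro i j hij
    have := hent i j
    rw [hw.1 i j hij, mul_zero] at this
    exact (mul_eq_zero.1 this).resolve_right (hkne j)
  · intro i
    have := hent i i
    rw [hw.2 i, mul_one] at this
    exact mul_right_cancel₀ (hkne i) (by rw [this, one_mul])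

/-- a nontrivial unipotent element fixes no point of the ovoid other than the base point -/
lemma fix_first {F : Type*} [Field F] [Fintype F] {t : ℕ} (h3 : (3 : F) = 0) (s : F →+* F)
    (hs1 : ∀ x, s (x ^ t) = x) (hs2 : ∀ x, s x = (x ^ t) ^ 3) (hsurj : ∀ y : F, ∃ x, x ^ t = y)
    {v : GL (Fin 7) F} (hv : v ∈ Usub t) {p q : Fin 7 → F} (hr : Rel s p q) (hp : p 0 ≠ 0)
    (hfix : p ᵥ* (v : Matrix (Fin 7) (Fin 7) F) = p) : v = 1 := by
  obtain ⟨u, hu, hmove⟩ := exists_move h3 s hs1 hs2 hsurj hr hp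
  have hwU : u⁻¹ * v * u ∈ Usub t := mul_mem (mul_mem (inv_mem hu) hv) hu
  have hw := usub_unitri hwU
  have hinv : Pi.single 0 (p 0) ᵥ* (u⁻¹ : GL (Fin 7) F).1 = p := by
    rw [← hmove, Matrix.vecMul_vecMul, ← Units.val_mul, mul_inv_cancel, Units.val_one,
      Matrix.vecMul_one]
  have hfw : Pi.single 0 (p 0) ᵥ* (u⁻¹ * v * u : GL (Fin 7) F).1 = Pi.single 0 (p 0) := by
    rw [Units.val_mul, Units.val_mul, ← Matrix.vecMul_vecMul, ← Matrix.vecMul_vecMul, hinv, hfix,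
      hmove]
  have hgood := ree_good h3 s hs1 hs2 (usub_le t hwU)
  generalize hw' : u⁻¹ * v * u = w at *
  have h0 : w.1 0 = Pi.single 0 1 := by
    ext j
    have := congrFun hfw j
    rw [Matrix.single_vecMul] at this
    by_cases hj : j = 0
    · subst hj; simp [hw.2]
    · simpa [hj, hp] using this
  have h6 : w.1 6 = Pi.single 6 1 := by
    ext i
    by_cases hi : i = 6
    · subst hi
      simp [hw.2]
    · have : i < 6 := by
        revert hi; revert i; decide
      simp [hw.1 6 i this, hi]
  have hd := diag_of_fix s w hgood 1 1 h0 h6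
  have : w = 1 := by
    ext i j
    by_cases hij : i = j
    · subst hij
      rw [hw.2]; simp
    · rw [hd i j hij, Units.val_one, Matrix.one_apply_ne hij]
  rw [this] at hw'
  calc v = u * (u⁻¹ * v * u) * u⁻¹ := by group
    _ = 1 := by rw [hw']; group

end ReePaper

open ReePaper

/-- `U(q)` is a Sylow 3-subgroup of `Ree(q)` (a 3-subgroup that is maximal among 3-subgroups
of `Ree(q)`), and any two distinct `Ree(q)`-conjugates of `U(q)` intersect trivially. -/
theorem usub_sylow_and_tihi (m : ℕ) (hm : 0 < m) (F : Type*) [Field F] [Fintype F]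
    (hF : Fintype.card F = 3 ^ (2 * m + 1)) :
    Usub (F := F) (3 ^ m) ≤ ReeGroup (F := F) (3 ^ m) ∧
    IsPGroup 3 ↥(Usub (F := F) (3 ^ m)) ∧
    (∀ Q : Subgroup (GL (Fin 7) F), Q ≤ ReeGroup (F := F) (3 ^ m) → IsPGroup 3 ↥Q →
      Usub (F := F) (3 ^ m) ≤ Q → Q = Usub (F := F) (3 ^ m)) ∧
    (∀ g₁ g₂ : GL (Fin 7) F, g₁ ∈ ReeGroup (F := F) (3 ^ m) → g₂ ∈ ReeGroup (F := F) (3 ^ m) →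
      (Usub (F := F) (3 ^ m)).map (MulAut.conj g₁).toMonoidHom ≠
        (Usub (F := F) (3 ^ m)).map (MulAut.conj g₂).toMonoidHom →
      (Usub (F := F) (3 ^ m)).map (MulAut.conj g₁).toMonoidHom ⊓
        (Usub (F := F) (3 ^ m)).map (MulAut.conj g₂).toMonoidHom = ⊥) := by
  haveI hp3 : Fact (Nat.Prime 3) := ⟨by norm_num⟩
  haveI hchar : CharP F 3 := by
    obtain ⟨p, hp⟩ := CharP.exists F
    obtain ⟨n, hprime, hn⟩ := FiniteField.card F p
    have h1 : p ∣ 3 ^ (2 * m + 1) := by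
      rw [← hF, hn]
      exact dvd_pow_self p n.ne_zero
    have h2 : p = 3 := (Nat.prime_dvd_prime_iff_eq hprime hp3.out).1 (hprime.dvd_of_dvd_pow h1)
    rw [← h2]; exact hp
  have h3 : (3 : F) = 0 := by exact_mod_cast CharP.cast_eq_zero F 3
  obtain ⟨s, hs⟩ : ∃ s : F →+* F, ∀ x, s x = x ^ (3 ^ (m + 1)) :=
    ⟨iterateFrobenius F 3 (m + 1), fun x => iterateFrobenius_def 3 (m + 1) x⟩
  have hs1 : ∀ x, s (x ^ 3 ^ m) = x := by
    intro x
    rw [hs, ← pow_mul, ← pow_add, show m + (m + 1) = 2 * m + 1 by ring, ← hF, FiniteField.pow_card]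
  have hs2 : ∀ x, s x = (x ^ 3 ^ m) ^ 3 := by
    intro x
    rw [hs, ← pow_mul, pow_succ]
  have hsurj : ∀ y : F, ∃ x, x ^ 3 ^ m = y := by
    have : Function.Injective (fun x : F => x ^ 3 ^ m) := by
      intro a b hab
      have := congrArg s hab
      simpa only [hs1] using this
    exact Finite.surjective_of_injective this
  refine ⟨usub_le _, ?_, ?_, ?_⟩
  · rintro ⟨g, hg⟩
    refine ⟨2, ?_⟩
    ext1
    rw [Subgroup.coe_pow, Subgroup.coe_one]
    apply Units.ext
    rw [Units.val_pow_eq_pow_val, Units.val_one]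
    exact (usub_unitri hg).pow_nine
  · intro Q hQ hQp hUQ
    refine le_antisymm ?_ hUQ
    letI act : MulAction Q (Fin 7 → F) :=
      { smul := fun g v => v ᵥ* (g.1⁻¹ : GL (Fin 7) F).1
        one_smul := fun v => by
          change v ᵥ* ((1 : GL (Fin 7) F)⁻¹).1 = v
          rw [inv_one, Units.val_one, Matrix.vecMul_one]
        mul_smul := fun g h v => by
          change v ᵥ* ((g.1 * h.1)⁻¹ : GL (Fin 7) F).1
            = (v ᵥ* (h.1⁻¹ : GL (Fin 7) F).1) ᵥ* (g.1⁻¹ : GL (Fin 7) F).1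
          rw [Matrix.vecMul_vecMul, _root_.mul_inv_rev, Units.val_mul] }
    have hcard : 3 ∣ Nat.card (Fin 7 → F) := by
      rw [Nat.card_eq_fintype_card, Fintype.card_fun, hF, Fintype.card_fin, ← pow_mul]
      exact dvd_pow_self 3 (by positivity)
    have hzero : (0 : Fin 7 → F) ∈ MulAction.fixedPoints Q (Fin 7 → F) := by
      intro g
      change (0 : Fin 7 → F) ᵥ* (g.1⁻¹ : GL (Fin 7) F).1 = 0
      rw [Matrix.zero_vecMul]
    obtain ⟨v, hv, hv0⟩ := hQp.exists_fixed_point_of_prime_dvd_card_of_fixed_point _ hcard hzero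
    have hfix : ∀ g ∈ Q, v ᵥ* (g : Matrix (Fin 7) (Fin 7) F) = v := by
      intro g hg
      have h := hv ⟨g⁻¹, inv_mem hg⟩
      change v ᵥ* ((g⁻¹)⁻¹ : GL (Fin 7) F).1 = v at h
      rwa [inv_inv] at h
    obtain ⟨a, haU, ha⟩ := exists_a (F := F) (3 ^ m) 1
    have hva := hfix a (hUQ haU)
    rw [ha, amat_vecMul] at hva
    have c1 := congrFun hva 1
    have c2 := congrFun hva 2
    have c3 := congrFun hva 3
    have c4 := congrFun hva 4
    have c5 := congrFun hva 5
    have c6 := congrFun hva 6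
    simp at c1 c2
    simp [c1, c2] at c3
    simp [c1, c2, c3] at c4
    simp [c1] at c5
    simp [c1, c2, c3, c4, c5] at c6
    have hvs : v = Pi.single 6 (v 6) := by
      ext i
      fin_cases i <;> simp [c1, c2, c3, c4, c5, c6]
    have hv6 : v 6 ≠ 0 := by
      intro h
      apply hv0
      rw [hvs, h, Pi.single_zero]
    intro g hg
    have hg6 : (g : Matrix (Fin 7) (Fin 7) F) 6 = Pi.single 6 1 := by
      have h := hfix g hg
      rw [hvs, Matrix.single_vecMul] at h
      ext j
      have hj := congrFun h j
      by_cases hj6 : j = 6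
      · subst hj6; simpa [hv6] using hj
      · simpa [hv6, hj6] using hj
    obtain ⟨u, hu, hd⟩ := key h3 s hs1 hs2 hsurj (hQ hg) 1 hg6
    have hupper : ∀ i j, j < i → (g : Matrix (Fin 7) (Fin 7) F) i j = 0 := by
      have hgu : (g : Matrix (Fin 7) (Fin 7) F) = (g * u).1 * (u⁻¹ : GL (Fin 7) F).1 := by
        rw [← Units.val_mul, mul_inv_cancel_right]
      rw [hgu]
      exact (upper_mul (fun i j h => hd i j h.ne') (usub_unitri (inv_mem hu)).1).1
    apply unitri_mem h3 s hs1 hs2 hsurj (hQ hg)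
    refine ⟨hupper, fun i => ?_⟩
    obtain ⟨k, hk⟩ := hQp ⟨g, hg⟩
    have hk' : (g : Matrix (Fin 7) (Fin 7) F) ^ 3 ^ k = 1 := by
      have := congrArg (fun x : Q => (x.1 : Matrix (Fin 7) (Fin 7) F)) hk
      simpa using this
    have hp := (upper_pow hupper (3 ^ k)).2 i
    rw [hk', Matrix.one_apply_eq] at hp
    have h4 : ((g : Matrix (Fin 7) (Fin 7) F) i i - 1) ^ 3 ^ k = 0 := by
      rw [sub_pow_char_pow, one_pow, ← hp, sub_self]
    exact sub_eq_zero.1 (pow_eq_zero_iff (by positivity) |>.1 h4)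
  · intro g₁ g₂ hg₁ hg₂ hne
    rw [eq_bot_iff]
    rintro x ⟨⟨u, hu, hux⟩, ⟨v, hv, hvx⟩⟩
    rw [Subgroup.mem_bot]
    by_contra hx
    apply hne
    simp only [MulEquiv.coe_toMonoidHom, MulAut.conj_apply] at hux hvx
    have hv1 : v ≠ 1 := by
      rintro rfl
      apply hx
      rw [← hvx]; group
    have hg : g₁⁻¹ * g₂ ∈ ReeGroup (3 ^ m) := mul_mem (inv_mem hg₁) hg₂
    have hgv : u * (g₁⁻¹ * g₂) = (g₁⁻¹ * g₂) * v := by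
      have : g₁ * u * g₁⁻¹ = g₂ * v * g₂⁻¹ := by rw [hux, hvx]
      calc u * (g₁⁻¹ * g₂) = g₁⁻¹ * (g₁ * u * g₁⁻¹) * g₂ := by group
        _ = _ := by rw [this]; group
    generalize hgdef : g₁⁻¹ * g₂ = g at hg hgv
    have hU := usub_unitri hu
    have hu6 : (u : Matrix (Fin 7) (Fin 7) F) 6 = Pi.single 6 1 := by
      ext i
      by_cases hi : i = 6
      · subst hi
        simp [hU.2]
      · have : i < 6 := by
          revert hi; revert i; decide
        simp [hU.1 6 i this, hi]
    have hfix : g.1 6 ᵥ* v.1 = g.1 6 := by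
      have h1 : (u.1 * g.1) 6 = (g.1 * v.1) 6 := by rw [← Units.val_mul, hgv, Units.val_mul]
      have h2 : (u.1 * g.1) 6 = u.1 6 ᵥ* g.1 := rfl
      have h4 : (g.1 * v.1) 6 = g.1 6 ᵥ* v.1 := rfl
      rw [← h4, ← h1, h2, hu6, Matrix.single_one_vecMul]
      rfl
    have hr := (ree_good h3 s hs1 hs2 hg).2 _ _ (rel_e6 s)
    simp only [Matrix.single_one_vecMul, Matrix.row_def] at hr
    have hg0 : g.1 6 0 = 0 := by
      by_contra h
      exact hv1 (fix_first h3 s hs1 hs2 hsurj hv hr h hfix)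
    obtain ⟨c1, c2, c3, c4, c5⟩ := rel_first_zero s hr hg0
    have hg6 : g.1 6 = Pi.single 6 (g.1 6 6) := by
      ext i
      fin_cases i <;> simp [hg0, c1, c2, c3, c4, c5]
    have hgi6 : (g⁻¹ : GL (Fin 7) F).1 6 = Pi.single 6 (g.1 6 6)⁻¹ := by
      have hd : g.1 6 6 ≠ 0 := by
        intro h
        apply ne_zero_row g 6
        rw [hg6, h, Pi.single_zero]
      have h1 : g.1 * (g⁻¹ : GL (Fin 7) F).1 = 1 := by
        rw [← Units.val_mul, mul_inv_cancel, Units.val_one]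
      have h2 : g.1 6 ᵥ* (g⁻¹ : GL (Fin 7) F).1 = (1 : Matrix (Fin 7) (Fin 7) F) 6 := by
        rw [← h1]; rfl
      rw [hg6, Matrix.single_vecMul] at h2
      ext j
      have hj := congrFun h2 j
      simp only [Pi.smul_apply, smul_eq_mul, Matrix.row_apply] at hj
      by_cases hj6 : j = 6
      · subst hj6
        rw [Matrix.one_apply_eq] at hj
        rw [Pi.single_eq_same]
        exact eq_inv_of_mul_eq_one_right hj
      · rw [Matrix.one_apply_ne (Ne.symm hj6)] at hj
        rw [Pi.single_eq_of_ne hj6]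
        exact (mul_eq_zero.1 hj).resolve_left hd
    have hg₂' : g₂ = g₁ * g := by rw [← hgdef]; group
    ext y
    simp only [Subgroup.mem_map, MulEquiv.coe_toMonoidHom, MulAut.conj_apply]
    constructor
    · rintro ⟨w, hw, rfl⟩
      refine ⟨g⁻¹ * w * g, ?_, ?_⟩
      · have := conj_mem h3 s hs1 hs2 hsurj (inv_mem hg) _ hgi6 hw
        rwa [inv_inv] at this
      · rw [hg₂']; group
    · rintro ⟨w, hw, rfl⟩
      refine ⟨g * w * g⁻¹, conj_mem h3 s hs1 hs2 hsurj hg _ hg6 hw, ?_⟩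
      rw [hg₂']; group
end
end

section
/- The centre of U(q) equals {S(0,0,c) : c ∈ F_q}. -/
open Matrix

set_option linter.unusedSectionVars false

noncomputable section

open ReePaper


namespace ReePaper

/-- Closed form of `S(a,b,c)` with `A = a^t`, `B = b^t`, `C = c^t` treated as independent. -/
def Tmat {R : Type*} [CommRing R] (a A b B c C : R) : Matrix (Fin 7) (Fin 7) R :=
  !![1, A, -B, A*B - C, -A*C - b - a*A^3, -c - B*C - A*B^2 - a^2*A^3,
      -C^2 + A*c - A*B*C - b*B - a*A^3*B + a^2*A^4;
     0, 1, a, B + a*A, -C - a*A^2, a*C - B^2 + a*A*B,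
      c - B*C - a*A*C + a*b - a*A^2*B - a^2*A^3;
     0, 0, 1, A, -A^2, C + A*B, -A*C + b - A^2*B + a*A^3;
     0, 0, 0, 1, A, B, A*B - C;
     0, 0, 0, 0, 1, -a, B + a*A;
     0, 0, 0, 0, 0, 1, -A;
     0, 0, 0, 0, 0, 0, 1]

set_option maxHeartbeats 8000000 in
theorem Tmat_mul {R : Type*} [CommRing R] [CharP R 3] (a A b B c C x X y Y z Z : R) :
    Tmat a A b B c C * Tmat x X y Y z Z =
      Tmat (a+x) (A+X) (b+y-a*X^3) (B+Y-A*x) (c+z-x*b+a*x*X^3-a^2*X^3)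
        (C+Z-X*B+A*X*x-A^2*x) := by
  have h3 : (3 : R) = 0 := by exact_mod_cast CharP.cast_eq_zero R 3
  ext i j
  fin_cases i <;> fin_cases j <;>
    simp [Tmat, Matrix.mul_apply, Fin.sum_univ_succ] <;> grind

set_option maxHeartbeats 8000000 in
theorem Smat_eq {F : Type*} [Field F] (t : ℕ) (a b c : F) (h3 : (3 : F) = 0) :
    Smat t a b c = Tmat a (a^t) b (b^t) c (c^t) := by
  ext i j
  fin_cases i <;> fin_cases j <;>
    simp [Smat, amat, bmat, cmat, Tmat, Matrix.mul_apply, Fin.sum_univ_succ] <;> ring_nf <;> grind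

theorem Tmat_zero {R : Type*} [CommRing R] : Tmat (0:R) 0 0 0 0 0 = 1 := by
  ext i j
  fin_cases i <;> fin_cases j <;> simp [Tmat]

theorem amat_eq {F : Type*} [Field F] (t : ℕ) (ht : t ≠ 0) (a : F) :
    amat t a = Tmat a (a^t) 0 (0^t) 0 (0^t) := by
  ext i j
  fin_cases i <;> fin_cases j <;> simp [amat, Tmat, ht] <;> ring

theorem bmat_eq {F : Type*} [Field F] (t : ℕ) (ht : t ≠ 0) (a : F) :
    bmat t a = Tmat 0 (0^t) a (a^t) 0 (0^t) := by
  ext i j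
  fin_cases i <;> fin_cases j <;> simp [bmat, Tmat, ht] <;> ring

theorem cmat_eq {F : Type*} [Field F] (t : ℕ) (ht : t ≠ 0) (a : F) :
    cmat t a = Tmat 0 (0^t) 0 (0^t) a (a^t) := by
  ext i j
  fin_cases i <;> fin_cases j <;> simp [cmat, Tmat, ht] <;> ring

theorem Usub_form {F : Type*} [Field F] [CharP F 3] (m : ℕ)
    (hq : ∀ x : F, ((x ^ 3 ^ m) ^ 3) ^ 3 ^ m = x) (g : GL (Fin 7) F)
    (hg : g ∈ Usub (F := F) (3 ^ m)) :
    ∃ a b c : F, (g : Matrix (Fin 7) (Fin 7) F) =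
      Tmat a (a ^ 3 ^ m) b (b ^ 3 ^ m) c (c ^ 3 ^ m) := by
  have ht : (3 ^ m : ℕ) ≠ 0 := by positivity
  have hadd : ∀ x y : F, (x + y) ^ 3 ^ m = x ^ 3 ^ m + y ^ 3 ^ m := fun x y =>
    have : Fact (Nat.Prime 3) := ⟨by norm_num⟩
    add_pow_char_pow x y 3 m
  have hsub : ∀ x y : F, (x - y) ^ 3 ^ m = x ^ 3 ^ m - y ^ 3 ^ m := fun x y =>
    have : Fact (Nat.Prime 3) := ⟨by norm_num⟩
    sub_pow_char_pow x y m
  have hneg : ∀ x : F, (-x) ^ 3 ^ m = - x ^ 3 ^ m := fun x => by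
    have := hsub 0 x
    simpa [ht] using this
  have hsq : ∀ x : F, (x ^ 2) ^ 3 ^ m = (x ^ 3 ^ m) ^ 2 := fun x => pow_right_comm _ _ _
  have hmul : ∀ a b c x y z : F, ∃ a1 b1 c1 : F,
      Tmat a (a ^ 3 ^ m) b (b ^ 3 ^ m) c (c ^ 3 ^ m) *
        Tmat x (x ^ 3 ^ m) y (y ^ 3 ^ m) z (z ^ 3 ^ m) =
      Tmat a1 (a1 ^ 3 ^ m) b1 (b1 ^ 3 ^ m) c1 (c1 ^ 3 ^ m) := by
    intro a b c x y z
    refine ⟨a+x, b+y-a*(x^3^m)^3, c+z-x*b+a*x*(x^3^m)^3-a^2*(x^3^m)^3, ?_⟩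
    rw [Tmat_mul]
    simp only [hadd, hsub, mul_pow, hq, hsq]
  unfold Usub at hg
  induction hg using Subgroup.closure_induction with
  | mem x hx =>
    rcases hx with ⟨a, h⟩ | ⟨a, h⟩ | ⟨a, h⟩
    · exact ⟨a, 0, 0, by rw [h, amat_eq _ ht]⟩
    · exact ⟨0, a, 0, by rw [h, bmat_eq _ ht]⟩
    · exact ⟨0, 0, a, by rw [h, cmat_eq _ ht]⟩
  | one => exact ⟨0, 0, 0, by simp only [zero_pow ht, Tmat_zero]; rfl⟩
  | mul x y _ _ hx hy =>
    obtain ⟨a, b, c, h⟩ := hx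
    obtain ⟨a1, b1, c1, h1⟩ := hy
    rw [Units.val_mul, h, h1]
    exact hmul _ _ _ _ _ _
  | inv x _ hx =>
    obtain ⟨a, b, c, h⟩ := hx
    refine ⟨-a, -b - a*(a^3^m)^3, -c-a*b+a^2*(a^3^m)^3, ?_⟩
    have h3 : (3 : F) = 0 := by exact_mod_cast CharP.cast_eq_zero F 3
    refine (Units.eq_inv_of_mul_eq_one_right ?_).symm
    rw [h, Tmat_mul, ← Tmat_zero]
    simp only [hadd, hsub, hneg, mul_pow, hq, hsq]
    congr 1 <;> grind

end ReePaper

/-- The centre of `U(q)` equals `{S(0,0,c) : c ∈ F_q}`. -/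
theorem usub_center (m : ℕ) (hm : 0 < m) (F : Type*) [Field F] [Fintype F]
    (hF : Fintype.card F = 3 ^ (2 * m + 1)) :
    {g : GL (Fin 7) F | g ∈ Usub (F := F) (3 ^ m) ∧
        ∀ u ∈ Usub (F := F) (3 ^ m), g * u = u * g} =
      {g : GL (Fin 7) F | ∃ c : F, (g : Matrix (Fin 7) (Fin 7) F) = Smat (3 ^ m) 0 0 c} := by
  have h3n : ((3 : ℕ) : F) = 0 := by
    have := FiniteField.cast_card_eq_zero F
    rw [hF] at this
    push_cast at this ⊢
    exact pow_eq_zero_iff (by positivity) |>.1 this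
  have h3 : (3 : F) = 0 := by exact_mod_cast h3n
  have : Fact (Nat.Prime 3) := ⟨by norm_num⟩
  have : CharP F 3 := charP_of_card_eq_prime_pow hF
  have ht : (3 ^ m : ℕ) ≠ 0 := by positivity
  have hq : ∀ x : F, ((x ^ 3 ^ m) ^ 3) ^ 3 ^ m = x := by
    intro x
    rw [← pow_mul, ← pow_mul]
    have : 3 ^ m * (3 * 3 ^ m) = Fintype.card F := by rw [hF]; ring
    rw [this, FiniteField.pow_card]
  have hunit : ∀ a b c : F, ∃ u : GL (Fin 7) F,
      (u : Matrix (Fin 7) (Fin 7) F) = Tmat a (a ^ 3 ^ m) b (b ^ 3 ^ m) c (c ^ 3 ^ m) := by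
    intro a b c
    have hd : IsUnit (Tmat a (a ^ 3 ^ m) b (b ^ 3 ^ m) c (c ^ 3 ^ m)).det := by
      rw [Matrix.det_of_isUpperTriangular]
      · simp [Tmat, Fin.prod_univ_succ]
      · intro i j hij
        fin_cases i <;> fin_cases j <;> simp [Tmat] at hij ⊢
    exact ⟨Matrix.nonsingInvUnit _ hd, rfl⟩
  ext g
  constructor
  · rintro ⟨hg, hc⟩
    obtain ⟨a, b, c, h⟩ := Usub_form m hq g hg
    have key : ∀ x y : F, (x = 0 ∨ y = 0) →
        Tmat a (a ^ 3 ^ m) b (b ^ 3 ^ m) c (c ^ 3 ^ m) *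
          Tmat x (x ^ 3 ^ m) y (y ^ 3 ^ m) 0 (0 ^ 3 ^ m) =
        Tmat x (x ^ 3 ^ m) y (y ^ 3 ^ m) 0 (0 ^ 3 ^ m) *
          Tmat a (a ^ 3 ^ m) b (b ^ 3 ^ m) c (c ^ 3 ^ m) := by
      intro x y hxy
      obtain ⟨u, hu⟩ := hunit x y 0
      have huU : u ∈ Usub (F := F) (3 ^ m) := by
        apply Subgroup.subset_closure
        rcases hxy with rfl | rfl
        · exact Or.inr (Or.inl ⟨y, by rw [hu, bmat_eq _ ht]⟩)
        · exact Or.inl ⟨x, by rw [hu, amat_eq _ ht]⟩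
      have := congrArg (fun u : GL (Fin 7) F => (u : Matrix (Fin 7) (Fin 7) F)) (hc u huU)
      simpa only [Units.val_mul, h, hu] using this
    have ha : a ^ 3 ^ m = 0 := by
      have := congrFun (congrFun (key 0 1 (Or.inl rfl)) 0) 3
      simp [Tmat, Matrix.mul_apply, Fin.sum_univ_succ, ht] at this
      grind
    have ha0 : a = 0 := pow_eq_zero_iff ht |>.1 ha
    subst ha0
    have hb : b ^ 3 ^ m = 0 := by
      have := congrFun (congrFun (key 1 0 (Or.inr rfl)) 0) 3
      simp [Tmat, Matrix.mul_apply, Fin.sum_univ_succ, ht] at this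
      grind
    have hb0 : b = 0 := pow_eq_zero_iff ht |>.1 hb
    subst hb0
    exact ⟨c, by rw [h, Smat_eq _ _ _ _ h3]⟩
  · rintro ⟨c, h⟩
    rw [Smat_eq _ _ _ _ h3] at h
    have hgU : g ∈ Usub (F := F) (3 ^ m) :=
      Subgroup.subset_closure (Or.inr (Or.inr ⟨c, by rw [h, cmat_eq _ ht]⟩))
    refine ⟨hgU, fun u hu => ?_⟩
    obtain ⟨x, y, z, hu⟩ := Usub_form m hq u hu
    apply Units.ext
    rw [Units.val_mul, Units.val_mul, h, hu, Tmat_mul, Tmat_mul]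
    simp only [zero_pow ht]
    congr 1 <;> ring
end
end

section
/- The number of elements of order exactly q−1 in the subgroup U(q)H(q) = {u·h : u ∈ U(q), h ∈ H(q)} equals φ(q−1)·q^3, where φ is Euler's totient function; equivalently, the proportion of elements of order q−1 in U(q)H(q) is φ(q−1)/(q−1). -/
open Matrix

set_option linter.unusedSectionVars false

noncomputable section

namespace ReePaper

section Rels

variable {F : Type*} [Field F]

/-- `α` with `x ^ t` replaced by an independent variable `X`. -/
def am (x X : F) : Matrix (Fin 7) (Fin 7) F :=
  !![1, X, 0, 0, -X^3*x, -X^3*x^2, X^4*x^2;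
     0, 1, x, X*x, -X^2*x, 0, -X^3*x^2;
     0, 0, 1, X, -X^2, 0, X^3*x;
     0, 0, 0, 1, X, 0, 0;
     0, 0, 0, 0, 1, -x, X*x;
     0, 0, 0, 0, 0, 1, -X;
     0, 0, 0, 0, 0, 0, 1]

/-- `β` with `x ^ t` replaced by an independent variable `X`. -/
def bm (x X : F) : Matrix (Fin 7) (Fin 7) F :=
  !![1, 0, -X, 0, -x, 0, -X*x;
     0, 1, 0, X, 0, -X^2, 0;
     0, 0, 1, 0, 0, 0, x;
     0, 0, 0, 1, 0, X, 0;
     0, 0, 0, 0, 1, 0, X;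
     0, 0, 0, 0, 0, 1, 0;
     0, 0, 0, 0, 0, 0, 1]

/-- `γ` with `x ^ t` replaced by an independent variable `X`. -/
def cm (x X : F) : Matrix (Fin 7) (Fin 7) F :=
  !![1, 0, 0, -X, 0, -x, -X^2;
     0, 1, 0, 0, -X, 0, x;
     0, 0, 1, 0, 0, X, 0;
     0, 0, 0, 1, 0, 0, -X;
     0, 0, 0, 0, 1, 0, 0;
     0, 0, 0, 0, 0, 1, 0;
     0, 0, 0, 0, 0, 0, 1]

theorem amat_eq_s8 (t : ℕ) (x : F) : amat t x = am x (x ^ t) := by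
  ext i j
  fin_cases i <;> fin_cases j <;> simp [amat, am] <;> ring

theorem bmat_eq_s8 (t : ℕ) (x : F) : bmat t x = bm x (x ^ t) := by
  ext i j
  fin_cases i <;> fin_cases j <;> simp [bmat, bm] <;> ring

theorem cmat_eq_s8 (t : ℕ) (x : F) : cmat t x = cm x (x ^ t) := by
  ext i j
  fin_cases i <;> fin_cases j <;> simp [cmat, cm] <;> ring

theorem cm_mul_cm (h3 : (3 : F) = 0) (c C d D : F) : cm c C * cm d D = cm (c + d) (C + D) := by
  ext i j
  fin_cases i <;> fin_cases j <;>
    simp [cm, Matrix.mul_apply, Fin.sum_univ_succ] <;> grind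

theorem cm_mul_bm (h3 : (3 : F) = 0) (c C d D : F) : cm c C * bm d D = bm d D * cm c C := by
  ext i j
  fin_cases i <;> fin_cases j <;>
    simp [cm, bm, Matrix.mul_apply, Fin.sum_univ_succ] <;> grind

set_option maxHeartbeats 2000000 in
theorem cm_mul_am (h3 : (3 : F) = 0) (c C d D : F) : cm c C * am d D = am d D * cm c C := by
  ext i j
  fin_cases i <;> fin_cases j <;>
    simp [cm, am, Matrix.mul_apply, Fin.sum_univ_succ] <;> grind

theorem bm_mul_bm (h3 : (3 : F) = 0) (c C d D : F) : bm c C * bm d D = bm (c + d) (C + D) := by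
  ext i j
  fin_cases i <;> fin_cases j <;>
    simp [bm, Matrix.mul_apply, Fin.sum_univ_succ] <;> grind

/-- The product `α β γ`, written out. -/
def sm (a A b B c C : F) : Matrix (Fin 7) (Fin 7) F :=
  !![1, A, -B, -C + A*B, -A*C - b - a*A^3, -c - B*C - A*B^2 - a^2*A^3,
      -C^2 + A*c - A*B*C - b*B - a*A^3*B + a^2*A^4;
     0, 1, a, B + a*A, -C - a*A^2, a*C - B^2 + a*A*B,
      c - B*C - a*A*C + a*b - a*A^2*B - a^2*A^3;
     0, 0, 1, A, -A^2, C + A*B, -A*C + b - A^2*B + a*A^3;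
     0, 0, 0, 1, A, B, -C + A*B;
     0, 0, 0, 0, 1, -a, B + a*A;
     0, 0, 0, 0, 0, 1, -A;
     0, 0, 0, 0, 0, 0, 1]

set_option maxHeartbeats 2000000 in
theorem abc_eq (h3 : (3 : F) = 0) (a A b B c C : F) :
    am a A * bm b B * cm c C = sm a A b B c C := by
  have h : am a A * bm b B = sm a A b B 0 0 := by
    ext i j
    fin_cases i <;> fin_cases j <;>
      simp [am, bm, sm, Matrix.mul_apply, Fin.sum_univ_succ] <;> grind
  rw [h]
  ext i j
  fin_cases i <;> fin_cases j <;>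
    simp [cm, sm, Matrix.mul_apply, Fin.sum_univ_succ] <;> grind

set_option maxHeartbeats 2000000 in
theorem bm_mul_am (h3 : (3 : F) = 0) (b B d D : F) :
    bm b B * am d D = am d D * bm b B * cm (-(b * d)) (-(B * D)) := by
  rw [abc_eq h3]
  ext i j
  fin_cases i <;> fin_cases j <;>
    simp [am, bm, sm, Matrix.mul_apply, Fin.sum_univ_succ] <;> grind

set_option maxHeartbeats 2000000 in
theorem am_mul_am (h3 : (3 : F) = 0) (a A d D : F) :
    am a A * am d D = am (a + d) (A + D) * bm (-(a * D ^ 3)) (-(A * d)) *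
      cm (a * d * D ^ 3 - a ^ 2 * D ^ 3) (A * d * D - A ^ 2 * d) := by
  rw [abc_eq h3]
  ext i j
  fin_cases i <;> fin_cases j <;>
    simp [am, sm, Matrix.mul_apply, Fin.sum_univ_succ] <;> grind

theorem sm_inj {a A b B c C a' A' b' B' c' C' : F}
    (h : sm a A b B c C = sm a' A' b' B' c' C') : a = a' ∧ b = b' ∧ c = c' := by
  have h01 := congrFun (congrFun h 0) 1
  have h02 := congrFun (congrFun h 0) 2
  have h03 := congrFun (congrFun h 0) 3
  have h04 := congrFun (congrFun h 0) 4
  have h05 := congrFun (congrFun h 0) 5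
  have h12 := congrFun (congrFun h 1) 2
  simp [sm] at h01 h02 h03 h04 h05 h12
  subst h01 h02 h12
  simp at h03
  subst h03
  simp at h04 h05
  exact ⟨rfl, h04, h05⟩

end Rels

end ReePaper

namespace ReePaper

section Group

variable {F : Type*} [Field F]

theorem det_sm (a A b B c C : F) : (sm a A b B c C).det = 1 := by
  have h : (sm a A b B c C).BlockTriangular id := by
    intro i j hij
    fin_cases i <;> fin_cases j <;> simp at hij <;> simp [sm]
  rw [Matrix.det_of_isUpperTriangular h]
  simp [sm, Fin.prod_univ_succ]

theorem sm_mul_cm (h3 : (3 : F) = 0) (a A b B c C d D : F) :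
    sm a A b B c C * cm d D = sm a A b B (c + d) (C + D) := by
  rw [← abc_eq h3, ← abc_eq h3, Matrix.mul_assoc, cm_mul_cm h3]

theorem sm_mul_bm (h3 : (3 : F) = 0) (a A b B c C d D : F) :
    sm a A b B c C * bm d D = sm a A (b + d) (B + D) c C := by
  rw [← abc_eq h3, ← abc_eq h3, Matrix.mul_assoc, cm_mul_bm h3, ← bm_mul_bm h3]
  simp only [Matrix.mul_assoc]

theorem sm_mul_am (h3 : (3 : F) = 0) (a A b B c C d D : F) :
    sm a A b B c C * am d D = sm (a + d) (A + D) (-(a * D ^ 3) + b) (-(A * d) + B)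
      (a * d * D ^ 3 - a ^ 2 * D ^ 3 + -(b * d) + c) (A * d * D - A ^ 2 * d + -(B * D) + C) := by
  rw [← abc_eq h3, Matrix.mul_assoc, cm_mul_am h3, Matrix.mul_assoc,
    ← Matrix.mul_assoc (bm b B), bm_mul_am h3, ← Matrix.mul_assoc, ← Matrix.mul_assoc,
    ← Matrix.mul_assoc, am_mul_am h3, abc_eq h3, sm_mul_bm h3, sm_mul_cm h3, sm_mul_cm h3]

theorem sm_zero : sm (0 : F) 0 0 0 0 0 = 1 := by
  ext i j
  fin_cases i <;> fin_cases j <;> simp [sm]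

theorem am_eq_sm (x X : F) : am x X = sm x X 0 0 0 0 := by
  ext i j
  fin_cases i <;> fin_cases j <;> simp [sm, am] <;> ring

theorem bm_eq_sm (x X : F) : bm x X = sm 0 0 x X 0 0 := by
  ext i j
  fin_cases i <;> fin_cases j <;> simp [sm, bm]; ring

theorem cm_eq_sm (x X : F) : cm x X = sm 0 0 0 0 x X := by
  ext i j
  fin_cases i <;> fin_cases j <;> simp [sm, cm]

/-- `S(a,b,c)` as an element of `GL`. -/
def Sg (t : ℕ) (p : F × F × F) : GL (Fin 7) F :=
  Matrix.GeneralLinearGroup.mkOfDetNeZero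
    (sm p.1 (p.1 ^ t) p.2.1 (p.2.1 ^ t) p.2.2 (p.2.2 ^ t)) (by rw [det_sm]; exact one_ne_zero)

theorem coe_Sg (t : ℕ) (p : F × F × F) : (Sg t p : Matrix (Fin 7) (Fin 7) F) =
    sm p.1 (p.1 ^ t) p.2.1 (p.2.1 ^ t) p.2.2 (p.2.2 ^ t) := rfl

theorem Sg_inj (t : ℕ) : Function.Injective (Sg (F := F) t) := by
  rintro ⟨a, b, c⟩ ⟨a', b', c'⟩ h
  have h' := congrArg (fun g : GL (Fin 7) F => (g : Matrix (Fin 7) (Fin 7) F)) h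
  simp only [coe_Sg] at h'
  obtain ⟨h1, h2, h3⟩ := sm_inj h'
  rw [h1, h2, h3]

/-- The arithmetic properties of the `t`-power map used below. -/
structure Good_s8 (F : Type*) [Field F] (t : ℕ) : Prop where
  three : (3 : F) = 0
  pos : t ≠ 0
  add : ∀ x y : F, (x + y) ^ t = x ^ t + y ^ t
  neg : ∀ x : F, (-x) ^ t = -x ^ t
  frob : ∀ x : F, ((x ^ t) ^ t) ^ 3 = x

theorem mem_Usub [Finite F] {t : ℕ} (G : Good_s8 F t) (g : GL (Fin 7) F) :
    g ∈ Usub (F := F) t ↔ ∃ p, g = Sg t p := by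
  have : Finite (GL (Fin 7) F) := inferInstance
  have h3 := G.three
  have fr : ∀ d : F, ((d ^ t) ^ 3) ^ t = d := fun d => by
    rw [← pow_mul, mul_comm 3, pow_mul, G.frob]
  have z : (0 : F) ^ t = 0 := zero_pow G.pos
  constructor
  · intro hg
    have hg' : g ∈ (Usub (F := F) t).toSubmonoid := hg
    unfold Usub at hg'
    rw [Subgroup.closure_toSubmonoid_of_finite] at hg'
    induction hg' using Submonoid.closure_induction_right with
    | one => exact ⟨(0, 0, 0), Units.ext (by rw [coe_Sg]; simp only [z]; exact sm_zero.symm)⟩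
    | mul_right x hx y hy ih =>
      have hx' : x ∈ Usub (F := F) t := by
        have : x ∈ (Usub (F := F) t).toSubmonoid := by
          unfold Usub
          rw [Subgroup.closure_toSubmonoid_of_finite]; exact hx
        exact this
      obtain ⟨⟨a, b, c⟩, rfl⟩ := ih hx'
      rcases hy with ⟨d, hd⟩ | ⟨d, hd⟩ | ⟨d, hd⟩
      · refine ⟨(a + d, -(a * (d ^ t) ^ 3) + b,
          a * d * (d ^ t) ^ 3 - a ^ 2 * (d ^ t) ^ 3 + -(b * d) + c), Units.ext ?_⟩
        rw [Units.val_mul, hd, amat_eq_s8, coe_Sg, coe_Sg, sm_mul_am h3]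
        simp only [sub_eq_add_neg, G.add, G.neg, mul_pow, fr]
        congr 1
        ring
      · refine ⟨(a, b + d, c), Units.ext ?_⟩
        rw [Units.val_mul, hd, bmat_eq_s8, coe_Sg, coe_Sg, sm_mul_bm h3]
        simp only [G.add]
      · refine ⟨(a, b, c + d), Units.ext ?_⟩
        rw [Units.val_mul, hd, cmat_eq_s8, coe_Sg, coe_Sg, sm_mul_cm h3]
        simp only [G.add]
  · rintro ⟨⟨a, b, c⟩, rfl⟩
    have e : Sg t (a, b, c) = Sg t (a, 0, 0) * Sg t (0, b, 0) * Sg t (0, 0, c) := by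
      apply Units.ext
      rw [Units.val_mul, Units.val_mul]
      simp only [coe_Sg, z]
      rw [← am_eq_sm, ← bm_eq_sm, ← cm_eq_sm, abc_eq h3]
    rw [e]
    refine mul_mem (mul_mem ?_ ?_) ?_ <;> apply Subgroup.subset_closure
    · exact Or.inl ⟨a, by rw [amat_eq_s8, am_eq_sm]; simp only [coe_Sg, z]⟩
    · exact Or.inr (Or.inl ⟨b, by rw [bmat_eq_s8, bm_eq_sm]; simp only [coe_Sg, z]⟩)
    · exact Or.inr (Or.inr ⟨c, by rw [cmat_eq_s8, cm_eq_sm]; simp only [coe_Sg, z]⟩)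

theorem hmat_mul (t : ℕ) (l k : Fˣ) : hmat t (l * k) = hmat t l * hmat t k := by
  unfold hmat
  rw [Matrix.diagonal_mul_diagonal]
  congr 1
  ext i
  fin_cases i <;> simp [mul_zpow, mul_pow, mul_comm]

theorem hmat_one (t : ℕ) : hmat t (1 : Fˣ) = 1 := by
  unfold hmat
  rw [← Matrix.diagonal_one]
  congr 1
  ext i
  fin_cases i <;> simp

/-- `h(λ)` as a homomorphism into `GL`. -/
def hg (t : ℕ) : Fˣ →* GL (Fin 7) F where
  toFun l := ⟨hmat t l, hmat t l⁻¹, by rw [← hmat_mul, mul_inv_cancel, hmat_one],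
    by rw [← hmat_mul, inv_mul_cancel, hmat_one]⟩
  map_one' := Units.ext (hmat_one t)
  map_mul' l k := Units.ext (hmat_mul t l k)

theorem coe_hg (t : ℕ) (l : Fˣ) : (hg t l : Matrix (Fin 7) (Fin 7) F) = hmat t l := rfl

theorem mem_Hsub (t : ℕ) (g : GL (Fin 7) F) : g ∈ Hsub (F := F) t ↔ ∃ l, g = hg t l := by
  have : Hsub (F := F) t = (hg t).range := by
    unfold Hsub
    have e : {g : GL (Fin 7) F | ∃ l : Fˣ, (g : Matrix (Fin 7) (Fin 7) F) = hmat t l} =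
        (((hg t).range : Subgroup (GL (Fin 7) F)) : Set (GL (Fin 7) F)) := by
      ext g
      constructor
      · rintro ⟨l, hl⟩; exact ⟨l, Units.ext hl.symm⟩
      · rintro ⟨l, rfl⟩; exact ⟨l, rfl⟩
    rw [e, Subgroup.closure_eq]
  rw [this]
  constructor
  · rintro ⟨l, rfl⟩; exact ⟨l, rfl⟩
  · rintro ⟨l, rfl⟩; exact ⟨l, rfl⟩

theorem hmat_eq (t : ℕ) (l : Fˣ) : hmat t l = Matrix.diagonal
    ![(l : F) ^ t, l / (l : F) ^ t, ((l : F) ^ t) ^ 2 / l, 1, l / ((l : F) ^ t) ^ 2,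
      (l : F) ^ t / l, 1 / (l : F) ^ t] := by
  unfold hmat
  congr 1
  have hl : (l : F) ≠ 0 := l.ne_zero
  have e : (l : F) ^ (2 * (t : ℤ)) = ((l : F) ^ t) ^ 2 := by
    rw [mul_comm, _root_.zpow_mul]; norm_cast
  ext i
  fin_cases i <;> simp [zpow_sub₀ hl, e]

theorem diag_mul_sm {L T : F} (hL : L ≠ 0) (hT : T ≠ 0) (a A b B c C : F) :
    Matrix.diagonal ![T, L / T, T ^ 2 / L, 1, L / T ^ 2, T / L, 1 / T] * sm a A b B c C =
    sm (L ^ 2 / T ^ 3 * a) (T ^ 2 / L * A) (T ^ 3 / L * b) (L / T * B) (L * c) (T * C) *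
    Matrix.diagonal ![T, L / T, T ^ 2 / L, 1, L / T ^ 2, T / L, 1 / T] := by
  ext i j
  rw [Matrix.diagonal_mul, Matrix.mul_diagonal]
  fin_cases i <;> fin_cases j <;> simp [sm] <;> field_simp

theorem hg_mul_Sg {t : ℕ} (G : Good_s8 F t) (l : Fˣ) (p : F × F × F) :
    hg t l * Sg t p = Sg t ((l : F) ^ 2 / ((l : F) ^ t) ^ 3 * p.1,
      ((l : F) ^ t) ^ 3 / (l : F) * p.2.1, (l : F) * p.2.2) * hg t l := by
  have fr : ∀ d : F, ((d ^ t) ^ 3) ^ t = d := fun d => by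
    rw [← pow_mul, mul_comm 3, pow_mul, G.frob]
  apply Units.ext
  rw [Units.val_mul, Units.val_mul, coe_hg, hmat_eq, coe_Sg, coe_Sg,
    diag_mul_sm l.ne_zero (pow_ne_zero _ l.ne_zero)]
  simp only [mul_pow, div_pow, fr]
  rw [pow_right_comm (l : F) 2 t]

theorem Sg_mul_hg_inj {t : ℕ} (G : Good_s8 F t) {p p' : F × F × F} {l l' : Fˣ}
    (h : Sg t p * hg t l = Sg t p' * hg t l') : p = p' ∧ l = l' := by
  have h' := congrArg (fun g : GL (Fin 7) F => (g : Matrix (Fin 7) (Fin 7) F) 0 0) h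
  simp only [Units.val_mul, coe_hg, hmat_eq, Matrix.mul_diagonal, coe_Sg] at h'
  simp [sm] at h'
  have hl : l = l' := by
    apply Units.ext
    rw [← G.frob l, ← G.frob l', h']
  subst hl
  exact ⟨Sg_inj t (mul_right_cancel h), rfl⟩

theorem hg_inj {t : ℕ} (G : Good_s8 F t) : Function.Injective (hg (F := F) t) := by
  intro l l' h
  exact (Sg_mul_hg_inj G (p := 0) (p' := 0) (by rw [h])).2

theorem commute_trivial {t : ℕ} (G : Good_s8 F t) {l : Fˣ} (hl : 2 < orderOf l) {p : F × F × F}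
    (h : hg t l * Sg t p = Sg t p * hg t l) : p = 0 := by
  have fr : ∀ d : F, ((d ^ t) ^ 3) ^ t = d := fun d => by
    rw [← pow_mul, mul_comm 3, pow_mul, G.frob]
  have hsq : (l : F) ^ 2 ≠ 1 := by
    intro h1
    have h2 : l ^ 2 = 1 := Units.ext (by simpa using h1)
    have := Nat.le_of_dvd (by norm_num) (orderOf_dvd_of_pow_eq_one h2)
    omega
  have h1 : (l : F) ≠ 1 := fun h => hsq (by rw [h, one_pow])
  have hL : (l : F) ≠ 0 := l.ne_zero
  have hT : (l : F) ^ t ≠ 0 := pow_ne_zero _ hL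
  rw [hg_mul_Sg G] at h
  have e := Sg_inj t (mul_right_cancel h)
  obtain ⟨a, b, c⟩ := p
  simp only [Prod.mk.injEq] at e
  obtain ⟨ea, eb, ec⟩ := e
  have key : ∀ u x : F, u * x = x → u ≠ 1 → x = 0 := by
    intro u x hu hne
    have : (u - 1) * x = 0 := by rw [sub_mul, hu]; ring
    exact (mul_eq_zero.mp this).resolve_left (sub_ne_zero.mpr hne)
  have ha := key _ _ ea (by
    intro h2
    rw [div_eq_one_iff_eq (pow_ne_zero _ hT)] at h2
    have h4 : ((l : F) ^ t) ^ 2 = l := by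
      rw [pow_right_comm, h2, fr]
    generalize (l : F) ^ t = T at *
    rw [← h4] at h2
    have : T = 1 := by
      have : T ^ 3 * (T - 1) = 0 := by linear_combination h2
      exact sub_eq_zero.mp ((mul_eq_zero.mp this).resolve_left (pow_ne_zero _ hT))
    exact h1 (by rw [← h4, this, one_pow]))
  have hb := key _ _ eb (by
    intro h2
    rw [div_eq_one_iff_eq hL] at h2
    have h4 : (l : F) ^ t = l := by
      conv_lhs => rw [← h2]
      exact fr _
    rw [h4] at h2
    apply hsq
    have : (l : F) * ((l : F) ^ 2 - 1) = 0 := by linear_combination h2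
    exact sub_eq_zero.mp ((mul_eq_zero.mp this).resolve_left hL))
  have hc := key _ _ ec h1
  rw [ha, hb, hc]; rfl

theorem card_Usub [Finite F] {t : ℕ} (G : Good_s8 F t) :
    Nat.card (Usub (F := F) t) = Nat.card F ^ 3 := by
  have e : Nat.card (F × F × F) = Nat.card (Usub (F := F) t) := by
    refine Nat.card_eq_of_bijective
      (fun p => (⟨Sg t p, (mem_Usub G _).2 ⟨p, rfl⟩⟩ : Usub (F := F) t)) ⟨?_, ?_⟩
    · intro p p' h
      exact Sg_inj t (Subtype.ext_iff.mp h)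
    · rintro ⟨g, hg⟩
      obtain ⟨p, rfl⟩ := (mem_Usub G _).1 hg
      exact ⟨p, rfl⟩
  rw [← e, Nat.card_prod, Nat.card_prod]
  ring

theorem conj_mem_s8 [Finite F] {t : ℕ} (G : Good_s8 F t) (l : Fˣ) {u : GL (Fin 7) F}
    (hu : u ∈ Usub (F := F) t) : hg t l * u * (hg t l)⁻¹ ∈ Usub (F := F) t := by
  obtain ⟨p, rfl⟩ := (mem_Usub G _).1 hu
  rw [hg_mul_Sg G, mul_inv_cancel_right]
  exact (mem_Usub G _).2 ⟨_, rfl⟩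

theorem exists_conj [Finite F] {t : ℕ} (G : Good_s8 F t) {l : Fˣ} (hl : 2 < orderOf l)
    {u : GL (Fin 7) F} (hu : u ∈ Usub (F := F) t) :
    ∃ v, u * hg t l = v * hg t l * v⁻¹ := by
  let f : Usub (F := F) t → Usub (F := F) t := fun v =>
    ⟨v * (hg t l * v⁻¹ * (hg t l)⁻¹), mul_mem v.2 (conj_mem_s8 G l (inv_mem v.2))⟩
  have hf : Function.Injective f := by
    rintro ⟨v, hv⟩ ⟨w, hw⟩ h
    have h1 : v * (hg t l * v⁻¹ * (hg t l)⁻¹) = w * (hg t l * w⁻¹ * (hg t l)⁻¹) :=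
      Subtype.ext_iff.mp h
    have h2 : hg t l * (w⁻¹ * v) = (w⁻¹ * v) * hg t l := by
      have h5 : v * hg t l * v⁻¹ = w * hg t l * w⁻¹ := by
        simpa [mul_assoc] using congrArg (· * hg t l) h1
      calc hg t l * (w⁻¹ * v) = w⁻¹ * (w * hg t l * w⁻¹) * v := by group
        _ = w⁻¹ * (v * hg t l * v⁻¹) * v := by rw [h5]
        _ = _ := by group
    obtain ⟨p, hp⟩ := (mem_Usub G _).1 (mul_mem (inv_mem hw) hv)
    rw [hp] at h2
    have hp0 := commute_trivial G hl h2
    obtain ⟨p1, hp1⟩ := (mem_Usub G _).1 (one_mem (Usub (F := F) t))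
    have hp10 : p1 = 0 := commute_trivial G hl (by rw [← hp1]; simp)
    have : w⁻¹ * v = 1 := by rw [hp, hp0, hp1, hp10]
    exact Subtype.ext (inv_mul_eq_one.mp this).symm
  obtain ⟨v, hv⟩ := Finite.surjective_of_injective hf ⟨u, hu⟩
  refine ⟨v, ?_⟩
  have : (v : GL (Fin 7) F) * (hg t l * (v : GL (Fin 7) F)⁻¹ * (hg t l)⁻¹) = u :=
    Subtype.ext_iff.mp hv
  rw [← this]
  group

theorem pow_form [Finite F] {t : ℕ} (G : Good_s8 F t) (l : Fˣ) {u : GL (Fin 7) F}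
    (hu : u ∈ Usub (F := F) t) (n : ℕ) :
    ∃ w ∈ Usub (F := F) t, (u * hg t l) ^ n = w * hg t (l ^ n) := by
  induction n with
  | zero => exact ⟨1, one_mem _, by simp⟩
  | succ n ih =>
    obtain ⟨w, hw, e⟩ := ih
    refine ⟨w * (hg t (l ^ n) * u * (hg t (l ^ n))⁻¹), mul_mem hw (conj_mem_s8 G _ hu), ?_⟩
    rw [pow_succ, e, pow_succ, map_mul]
    group

theorem order_iff [Finite F] {t : ℕ} (G : Good_s8 F t) (hq : 3 < Nat.card F) (l : Fˣ)
    {u : GL (Fin 7) F} (hu : u ∈ Usub (F := F) t) :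
    orderOf (u * hg t l) = Nat.card F - 1 ↔ orderOf l = Nat.card F - 1 := by
  constructor
  · intro h
    obtain ⟨w, hw, e⟩ := pow_form G l hu (orderOf l)
    rw [pow_orderOf_eq_one, map_one, mul_one] at e
    have h1 : orderOf w ∣ Nat.card F ^ 3 := by
      rw [← card_Usub G]
      exact Subgroup.orderOf_dvd_natCard _ hw
    have h2 : orderOf w ∣ Nat.card F - 1 := by
      rw [← e, ← h]
      exact orderOf_pow_dvd _
    have cop : Nat.Coprime (Nat.card F ^ 3) (Nat.card F - 1) := by
      apply Nat.Coprime.pow_left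
      exact (Nat.coprime_self_sub_right (by omega)).2 (Nat.coprime_one_right _)
    have h3 : orderOf w = 1 := Nat.eq_one_of_dvd_coprimes cop h1 h2
    rw [orderOf_eq_one_iff] at h3
    rw [h3] at e
    apply Nat.dvd_antisymm
    · rw [← Nat.card_units]
      exact orderOf_dvd_natCard l
    · rw [← h]
      exact orderOf_dvd_of_pow_eq_one e
  · intro h
    obtain ⟨v, hv⟩ := exists_conj G (l := l) (by omega) hu
    rw [hv, ← h, ← orderOf_injective (hg t) (hg_inj G) l]
    have := orderOf_injective (MulAut.conj v).toMonoidHom (MulAut.conj v).injective (hg t l)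
    simpa using this

theorem good_of_card [Fintype F] (m : ℕ) (hF : Fintype.card F = 3 ^ (2 * m + 1)) :
    Good_s8 F (3 ^ m) := by
  have : Fact (Nat.Prime 3) := ⟨Nat.prime_three⟩
  have : CharP F 3 := charP_of_card_eq_prime_pow hF
  refine ⟨?_, by positivity, fun x y => add_pow_char_pow .., fun x => ?_, fun x => ?_⟩
  · exact_mod_cast CharP.cast_eq_zero F 3
  · exact Odd.neg_pow (Odd.pow (by decide)) x
  · rw [← pow_mul, ← pow_mul]
    have : 3 ^ m * (3 ^ m * 3) = Fintype.card F := by rw [hF]; ring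
    rw [this, FiniteField.pow_card]

end Group

end ReePaper

open ReePaper

/-- The number of elements of order exactly `q - 1` in `U(q)H(q)` equals `φ(q-1) · q^3`. -/
theorem uh_order_count (m : ℕ) (hm : 0 < m) (F : Type*) [Field F] [Fintype F]
    (hF : Fintype.card F = 3 ^ (2 * m + 1)) :
    Nat.card {g : GL (Fin 7) F //
        (∃ u ∈ Usub (F := F) (3 ^ m), ∃ h ∈ Hsub (F := F) (3 ^ m), g = u * h) ∧
        orderOf g = 3 ^ (2 * m + 1) - 1} =
      Nat.totient (3 ^ (2 * m + 1) - 1) * (3 ^ (2 * m + 1)) ^ 3 := by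
  classical
  have G := good_of_card m hF
  have hc : Nat.card F = 3 ^ (2 * m + 1) := by rw [Nat.card_eq_fintype_card, hF]
  have hq : 3 < Nat.card F := by
    rw [hc]
    calc 3 < 3 ^ 2 := by norm_num
      _ ≤ 3 ^ (2 * m + 1) := Nat.pow_le_pow_right (by norm_num) (by omega)
  rw [← hc]
  have e : Nat.card ({l : Fˣ // orderOf l = Nat.card F - 1} × (F × F × F)) =
      Nat.card {g : GL (Fin 7) F //
        (∃ u ∈ Usub (F := F) (3 ^ m), ∃ h ∈ Hsub (F := F) (3 ^ m), g = u * h) ∧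
        orderOf g = Nat.card F - 1} := by
    refine Nat.card_eq_of_bijective (fun x => ⟨Sg (3 ^ m) x.2 * hg (3 ^ m) x.1.1,
      ⟨_, (mem_Usub G _).2 ⟨x.2, rfl⟩, _, (mem_Hsub _ _).2 ⟨x.1.1, rfl⟩, rfl⟩,
      (order_iff G hq _ ((mem_Usub G _).2 ⟨x.2, rfl⟩)).2 x.1.2⟩) ⟨?_, ?_⟩
    · rintro ⟨⟨l, hl⟩, p⟩ ⟨⟨l', hl'⟩, p'⟩ h
      obtain ⟨h1, h2⟩ := Sg_mul_hg_inj G (Subtype.ext_iff.mp h)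
      simp only at h1 h2
      subst h1 h2
      rfl
    · rintro ⟨g, ⟨u, hu, h, hh, rfl⟩, ho⟩
      obtain ⟨l, rfl⟩ := (mem_Hsub _ _).1 hh
      have hl := (order_iff G hq l hu).1 ho
      obtain ⟨p, rfl⟩ := (mem_Usub G _).1 hu
      exact ⟨(⟨l, hl⟩, p), rfl⟩
  rw [← e, Nat.card_prod, Nat.card_prod, Nat.card_prod]
  have ht : Nat.card {l : Fˣ // orderOf l = Nat.card F - 1} = Nat.totient (Nat.card F - 1) := by
    rw [Nat.card_eq_fintype_card, Fintype.card_subtype]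
    apply IsCyclic.card_orderOf_eq_totient
    rw [← Nat.card_units, Nat.card_eq_fintype_card]
  rw [ht]
  ring
end
end
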